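/- Let S be a smooth cubic surface in P^3 over R with S(R) ≠ ∅. If S(R) has one connected component then H^0_S(R) = 0. If S(R) has two connected components (one convex and one non-convex) then H^0_S(R) ≅ Z/2Z; explicitly, fixing a point P_0 on the non-convex component, the map sending [P − P_0] to 0 if P lies on the non-convex component and to 1 if P lies on the convex component extends to an isomorphism H^0_S(R) ≅ Z/2Z. -/

import Mathlib

/- Common framework: points, lines, intersection divisors, the secant-tangent span,
the groups `H_S(K)`, geometric notions over the algebraic closure, and topologies. -/

open MvPolynomial

noncomputable section

namespace CubicSurf

variable {K L : Type*} [Field K] [Field L] {n : ℕ}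

/-- The set of `K`-rational points of the projective hypersurface `F = 0`. -/
def zeroSet (F : MvPolynomial (Fin n) K) : Set (Projectivization K (Fin n → K)) :=
  {P | eval P.rep F = 0}

/-- The binary form obtained by restricting `F` to the line spanned by `u` and `v`,
via the parametrization `(s : t) ↦ s • u + t • v`. -/
def lineRestrict (F : MvPolynomial (Fin n) K) (u v : Fin n → K) : MvPolynomial (Fin 2) K :=
  aeval (fun i => C (u i) * X 0 + C (v i) * X 1) F

/-- A projective line: a 2-dimensional linear subspace of `K^n`. -/
def IsLine (W : Submodule K (Fin n → K)) : Prop := Module.finrank K W = 2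

/-- The line `W` lies (geometrically) on the hypersurface `F = 0`. -/
def LineOnSurf (F : MvPolynomial (Fin n) K) (W : Submodule K (Fin n → K)) : Prop :=
  ∀ u v : Fin n → K, u ∈ W → v ∈ W → lineRestrict F u v = 0

/-- The projective point `P` lies on the line `W`. -/
def OnLine (W : Submodule K (Fin n → K)) (P : Projectivization K (Fin n → K)) : Prop :=
  P.rep ∈ W

/-- The set of `K`-points of the line `W`. -/
def linePts (W : Submodule K (Fin n → K)) : Set (Projectivization K (Fin n → K)) :=
  {P | OnLine W P}

/-- `ℓ · S = P + Q + R`: the intersection divisor (with multiplicities) of the line `W`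
with the hypersurface `F = 0` is `P + Q + R`. -/
def MeetsIn (F : MvPolynomial (Fin n) K) (W : Submodule K (Fin n → K))
    (P Q R : Projectivization K (Fin n → K)) : Prop :=
  ∃ (u v : Fin n → K) (_ : u ∈ W) (_ : v ∈ W) (_ : LinearIndependent K ![u, v])
    (c : K) (l m : Fin 3 → K) (h : ∀ k, l k • u + m k • v ≠ 0),
      c ≠ 0 ∧
      lineRestrict F u v = C c * ∏ k : Fin 3, (C (m k) * X 0 - C (l k) * X 1) ∧
      Projectivization.mk K _ (h 0) = P ∧
      Projectivization.mk K _ (h 1) = Q ∧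
      Projectivization.mk K _ (h 2) = R

/-- Membership in the span of a set of points under the secant/tangent process:
the smallest subset of `S(K)` containing `B` such that whenever `P`, `Q` are in it and a
`K`-line `ℓ ⊄ S` satisfies `ℓ·S = P+Q+R` with `R ∈ S(K)`, then `R` is in it. -/
inductive SpanMem (F : MvPolynomial (Fin n) K) (B : Set (Projectivization K (Fin n → K))) :
    Projectivization K (Fin n → K) → Prop
  | base (P : Projectivization K (Fin n → K)) (hP : P ∈ B) : SpanMem F B P
  | secant (P Q R : Projectivization K (Fin n → K)) (W : Submodule K (Fin n → K))
      (hW : IsLine W) (hWS : ¬ LineOnSurf F W) (hP : SpanMem F B P) (hQ : SpanMem F B Q)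
      (hR : R ∈ zeroSet F) (hm : MeetsIn F W P Q R) : SpanMem F B R

/-- The span of a set of points under the secant/tangent process. -/
def Span (F : MvPolynomial (Fin n) K) (B : Set (Projectivization K (Fin n → K))) :
    Set (Projectivization K (Fin n → K)) :=
  {P | SpanMem F B P}

/-- Smoothness of the projective hypersurface `F = 0`: over the algebraic closure there is
no nonzero common zero of `F` and all of its partial derivatives. -/
def IsSmoothHypersurf (F : MvPolynomial (Fin n) K) : Prop :=
  ∀ v : Fin n → AlgebraicClosure K,
    eval v (MvPolynomial.map (algebraMap K (AlgebraicClosure K)) F) = 0 →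
    (∀ i, eval v (pderiv i (MvPolynomial.map (algebraMap K (AlgebraicClosure K)) F)) = 0) →
    v = 0

/-- A smooth cubic hypersurface. -/
def SmoothCubic (F : MvPolynomial (Fin n) K) : Prop :=
  F.IsHomogeneous 3 ∧ IsSmoothHypersurf F

/-- The linear form cutting out the tangent plane `Π_P` of `F = 0` at `P`,
evaluated at the representative of a point `Q`; `Q ∈ Π_P` iff this vanishes. -/
def tangentEval (F : MvPolynomial (Fin n) K) (P Q : Projectivization K (Fin n → K)) : K :=
  ∑ i, eval P.rep (pderiv i F) * Q.rep i

/-- The set of `K`-points of the tangent plane `Π_P`. -/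
def tangentPlanePts (F : MvPolynomial (Fin n) K) (P : Projectivization K (Fin n → K)) :
    Set (Projectivization K (Fin n → K)) :=
  {Q | tangentEval F P Q = 0}

/-- The set of `K`-points of `Γ_P = S ∩ Π_P`. -/
def GammaPts (F : MvPolynomial (Fin n) K) (P : Projectivization K (Fin n → K)) :
    Set (Projectivization K (Fin n → K)) :=
  zeroSet F ∩ tangentPlanePts F P

/-! ### Base change along a field embedding -/

/-- Base change of a vector along a field embedding. -/
def clVec (φ : K →+* L) (v : Fin n → K) : Fin n → L := fun i => φ (v i)

lemma clVec_ne_zero (φ : K →+* L) {v : Fin n → K} (hv : v ≠ 0) : clVec φ v ≠ 0 := by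
  intro h
  apply hv
  funext i
  have := congrFun h i
  simpa [clVec] using φ.injective (by simpa [clVec] using this)

/-- Base change of a projective point along a field embedding. -/
def clPt (φ : K →+* L) (P : Projectivization K (Fin n → K)) :
    Projectivization L (Fin n → L) :=
  Projectivization.mk L (clVec φ P.rep) (clVec_ne_zero φ P.rep_nonzero)

lemma eval_smul_of_isHomogeneous {R : Type*} [CommSemiring R] {F : MvPolynomial (Fin n) R}
    {d : ℕ} (hF : F.IsHomogeneous d) (a : R) (w : Fin n → R) :
    eval (a • w) F = a ^ d * eval w F := by
  classical
  rw [eval_eq', eval_eq', Finset.mul_sum]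
  refine Finset.sum_congr rfl fun s hs => ?_
  have hdeg : ∑ i, s i = d := by
    have h1 := hF (MvPolynomial.mem_support_iff.mp hs)
    rw [Finsupp.weight_apply] at h1
    rw [← h1, Finsupp.sum_fintype]
    · simp
    · intro i; simp
  have key : ∀ i : Fin n, (a • w) i ^ s i = a ^ s i * w i ^ s i := by
    intro i; simp [mul_pow]
  rw [Finset.prod_congr rfl (fun i _ => key i), Finset.prod_mul_distrib,
    Finset.prod_pow_eq_pow_sum, hdeg]
  ring

lemma clVec_eval (φ : K →+* L) (F : MvPolynomial (Fin n) K) (v : Fin n → K) :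
    eval (clVec φ v) (MvPolynomial.map φ F) = φ (eval v F) := by
  rw [eval_map]
  have h : φ (eval v F) = φ (eval₂Hom (RingHom.id K) v F) := rfl
  rw [h, map_eval₂Hom]
  rfl

/-- A point given by a vector on which a homogeneous `F` vanishes lies in the zero set. -/
lemma mk_mem_zeroSet {F : MvPolynomial (Fin n) K} {d : ℕ} (hF : F.IsHomogeneous d)
    {v : Fin n → K} (hv : v ≠ 0) (h : eval v F = 0) :
    Projectivization.mk K v hv ∈ zeroSet F := by
  obtain ⟨a, ha⟩ := Projectivization.exists_smul_eq_mk_rep K v hv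
  show eval (Projectivization.mk K v hv).rep F = 0
  have hrep : (Projectivization.mk K v hv).rep = (a : K) • v := by
    rw [← ha, Units.smul_def]
  rw [hrep, eval_smul_of_isHomogeneous hF, h, mul_zero]

lemma clPt_mem_zeroSet (φ : K →+* L) {F : MvPolynomial (Fin n) K} {d : ℕ}
    (hF : F.IsHomogeneous d) {P : Projectivization K (Fin n → K)} (hP : P ∈ zeroSet F) :
    clPt φ P ∈ zeroSet (MvPolynomial.map φ F) := by
  apply mk_mem_zeroSet (hF.map φ)
  rw [clVec_eval, hP, map_zero]

/-- The induced map on points of `S` under base change of the field. -/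
def ptMap (φ : K →+* L) {F : MvPolynomial (Fin n) K} {d : ℕ} (hF : F.IsHomogeneous d)
    (P : zeroSet F) : zeroSet (MvPolynomial.map φ F) :=
  ⟨clPt φ P.1, clPt_mem_zeroSet φ hF P.2⟩

/-- A subspace of `L^n` is defined over `K` (w.r.t. `φ : K →+* L`) if it is spanned by
the base change of a `K`-subspace. -/
def DefinedOver (φ : K →+* L) (W : Submodule L (Fin n → L)) : Prop :=
  ∃ W₀ : Submodule K (Fin n → K), W = Submodule.span L (clVec φ '' (W₀ : Set (Fin n → K)))

/-! ### Asymptotic lines, parabolic points, Eckardt points -/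

/-- The line `W` is asymptotic to `F = 0` at `P`: the intersection multiplicity
`(ℓ · S)_P` is at least 3. -/
def AsymptoticAt (F : MvPolynomial (Fin n) K) (W : Submodule K (Fin n → K))
    (P : Projectivization K (Fin n → K)) : Prop :=
  IsLine W ∧ P.rep ∈ W ∧
    ∃ v ∈ W, LinearIndependent K ![P.rep, v] ∧
      ∃ c : K, lineRestrict F P.rep v = C c * (X 1) ^ 3

/-- The set of asymptotic lines at `P`. -/
def AsymSet (F : MvPolynomial (Fin n) K) (P : Projectivization K (Fin n → K)) :
    Set (Submodule K (Fin n → K)) :=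
  {W | AsymptoticAt F W P}

/-- A point of a hypersurface is parabolic (relative to the given field) if it does
not have exactly two distinct asymptotic lines (i.e. it has one or infinitely many). -/
def ParabolicAt (F : MvPolynomial (Fin n) K) (P : Projectivization K (Fin n → K)) : Prop :=
  ¬ ∃ W₁ W₂ : Submodule K (Fin n → K), W₁ ≠ W₂ ∧ AsymSet F P = {W₁, W₂}

/-- An Eckardt point (relative to the given field): three distinct lines lying on the
surface pass through `P`. -/
def EckardtAt (F : MvPolynomial (Fin n) K) (P : Projectivization K (Fin n → K)) : Prop :=
  ∃ W₁ W₂ W₃ : Submodule K (Fin n → K), W₁ ≠ W₂ ∧ W₁ ≠ W₃ ∧ W₂ ≠ W₃ ∧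
    (∀ W ∈ ({W₁, W₂, W₃} : Set (Submodule K (Fin n → K))),
      IsLine W ∧ LineOnSurf F W ∧ OnLine W P)

section geometric

variable (F : MvPolynomial (Fin n) K)

/-- `F` base changed to the algebraic closure of `K`. -/
def clF : MvPolynomial (Fin n) (AlgebraicClosure K) :=
  MvPolynomial.map (algebraMap K (AlgebraicClosure K)) F

/-- A `K`-point of `S` is parabolic (a geometric notion, checked over `K̄`). -/
def IsParabolic (P : Projectivization K (Fin n → K)) : Prop :=
  ParabolicAt (clF F) (clPt (algebraMap K (AlgebraicClosure K)) P)

/-- A `K`-point of `S` is an Eckardt point (a geometric notion, checked over `K̄`). -/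
def IsEckardt (P : Projectivization K (Fin n → K)) : Prop :=
  EckardtAt (clF F) (clPt (algebraMap K (AlgebraicClosure K)) P)

/-- A `K`-point of `S` is `K`-hyperbolic: it has exactly two asymptotic lines over `K̄`,
and both are defined over `K`. -/
def IsHyperbolic (P : Projectivization K (Fin n → K)) : Prop :=
  ∃ W₁ W₂, W₁ ≠ W₂ ∧
    AsymSet (clF F) (clPt (algebraMap K (AlgebraicClosure K)) P) = {W₁, W₂} ∧
    DefinedOver (algebraMap K (AlgebraicClosure K)) W₁ ∧
    DefinedOver (algebraMap K (AlgebraicClosure K)) W₂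

/-- A `K`-point of `S` is `K`-ternary: at least one of the asymptotic lines of `S`
through `P` is defined over `K`. -/
def IsTernary (P : Projectivization K (Fin n → K)) : Prop :=
  ∃ W ∈ AsymSet (clF F) (clPt (algebraMap K (AlgebraicClosure K)) P),
    DefinedOver (algebraMap K (AlgebraicClosure K)) W

end geometric

/-! ### The group `H_S(K)` -/

variable (F : MvPolynomial (Fin n) K)

/-- `G_S(K)`: the free abelian group on the set `S(K)`. -/
abbrev GS := FreeAbelianGroup (zeroSet F)

/-- The degree homomorphism `G_S(K) → ℤ`, `Σ aᵢ Pᵢ ↦ Σ aᵢ`. -/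
def degHom : GS F →+ ℤ := FreeAbelianGroup.lift fun _ => (1 : ℤ)

/-- `P + Q + R` is a "three point sum": either cut out on `S` with multiplicity by a
`K`-line not contained in `S`, or `P`, `Q`, `R` all lie on a `K`-line contained in `S`. -/
def TripleRel (P Q R : zeroSet F) : Prop :=
  ∃ W : Submodule K (Fin n → K), IsLine W ∧
    ((¬ LineOnSurf F W ∧ MeetsIn F W P.1 Q.1 R.1) ∨
      (LineOnSurf F W ∧ OnLine W P.1 ∧ OnLine W Q.1 ∧ OnLine W R.1))

/-- `G'_S(K)`: the subgroup generated by all three point sums. -/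
def Gp : AddSubgroup (GS F) :=
  AddSubgroup.closure {x | ∃ P Q R : zeroSet F, TripleRel F P Q R ∧
    x = FreeAbelianGroup.of P + FreeAbelianGroup.of Q + FreeAbelianGroup.of R}

/-- `G''_S(K)`: the degree-0 part of `G'_S(K)`. -/
def Gpp : AddSubgroup (GS F) := Gp F ⊓ (degHom F).ker

/-- `H_S(K) = G_S(K)/G''_S(K)`. -/
abbrev HS := GS F ⧸ Gpp F

/-- The class `[P] ∈ H_S(K)` of a point `P ∈ S(K)`. -/
def HClass (P : zeroSet F) : HS F := QuotientAddGroup.mk' (Gpp F) (FreeAbelianGroup.of P)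

/-- The degree homomorphism `H_S(K) → ℤ`. -/
def HdegHom : HS F →+ ℤ :=
  QuotientAddGroup.lift (Gpp F) (degHom F) (fun _ hx => hx.2)

/-- `H⁰_S(K)`: the degree-0 part of `H_S(K)`. -/
def H0 : AddSubgroup (HS F) := (HdegHom F).ker

@[simp] lemma HdegHom_HClass (P : zeroSet F) : HdegHom F (HClass F P) = 1 := by
  simp [HdegHom, HClass, degHom]

/-- The class `[P] - [Q]`, as an element of `H⁰_S(K)`. -/
def H0diff (P Q : zeroSet F) : H0 F :=
  ⟨HClass F P - HClass F Q, by simp [H0, AddMonoidHom.mem_ker, map_sub]⟩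

/-! ### mod-`p` dimensions and torsion -/

/-- `A/pA` for an abelian group `A`. -/
abbrev ModP (p : ℕ) (A : Type*) [AddCommGroup A] : Type _ :=
  A ⧸ (AddMonoidHom.range (nsmulAddMonoidHom p : A →+ A))

instance ModP.instModule (p : ℕ) (A : Type*) [AddCommGroup A] : Module (ZMod p) (ModP p A) :=
  QuotientAddGroup.zmodModule (fun x => ⟨x, rfl⟩)

/-- `dim_{F_p} A/pA`. -/
def dimModP (p : ℕ) (A : Type*) [AddCommGroup A] : Cardinal := Module.rank (ZMod p) (ModP p A)

/-- The `k`-torsion subgroup `A[k]` of an abelian group `A`. -/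
def torsion (k : ℕ) (A : Type*) [AddCommGroup A] : AddSubgroup A :=
  (nsmulAddMonoidHom k : A →+ A).ker

instance torsion.instModule (k : ℕ) (A : Type*) [AddCommGroup A] :
    Module (ZMod k) (torsion k A) :=
  AddCommGroup.zmodModule (fun x => Subtype.ext x.2)

/-- `dim_{F_k} A[k]`: the dimension of the `k`-torsion subgroup (for `k` prime). -/
def dimTorsion (k : ℕ) (A : Type*) [AddCommGroup A] : Cardinal :=
  Module.rank (ZMod k) (torsion k A)

/-! ### Topologies -/

/-- The quotient topology on projective space induced by the topology of `K`. -/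
def projTop (K : Type*) [Field K] [TopologicalSpace K] (n : ℕ) :
    TopologicalSpace (Projectivization K (Fin n → K)) :=
  TopologicalSpace.coinduced
    (fun v : {v : Fin n → K // v ≠ 0} => Projectivization.mk K v.1 v.2) inferInstance

/-- The induced topology on the set of `K`-points of `S`. -/
def surfTop (F : MvPolynomial (Fin n) K) [TopologicalSpace K] :
    TopologicalSpace (zeroSet F) :=
  TopologicalSpace.induced Subtype.val (projTop K n)

/-- `K` (a topological field) is a local field: it is isomorphic, as a topological field,
to `ℝ`, to `ℂ`, or to a finite extension of `ℚ_p` for some prime `p` (with its canonical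
topology, namely the `ℚ_p`-vector space topology). -/
def IsLocalField (K : Type*) [Field K] [TopologicalSpace K] : Prop :=
  (∃ e : K ≃+* ℝ, IsHomeomorph e) ∨ (∃ e : K ≃+* ℂ, IsHomeomorph e) ∨
    (∃ (p : ℕ), p.Prime ∧ ∃ (_ : Fact p.Prime) (f : ℚ_[p] →+* K) (m : ℕ)
      (e : K ≃+ (Fin m → ℚ_[p])),
      (∀ (c : ℚ_[p]) (x : K), e (f c * x) = c • e x) ∧ IsHomeomorph e)

end CubicSurf

namespace CubicSurf

open MvPolynomial

/-- A subset `T` of `ℙ³(ℝ)` is *convex* if it avoids some projective plane `{φ = 0}`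
and, in the affine chart `{φ = 1}`, it is the (relative) boundary of a convex set. -/
def ProjConvex (T : Set (Projectivization ℝ (Fin 4 → ℝ))) : Prop :=
  ∃ φ : (Fin 4 → ℝ) →ₗ[ℝ] ℝ, (∀ P ∈ T, φ P.rep ≠ 0) ∧
    ∃ C : Set (Fin 4 → ℝ), Convex ℝ C ∧
      {v : Fin 4 → ℝ | φ v = 1 ∧ ∃ h : v ≠ 0, Projectivization.mk ℝ v h ∈ T} =
        intrinsicFrontier ℝ C

end CubicSurf

/-!
Let `T` be the symmetric trilinear form with `T(v, v, v) = F(v)`. A point `Q` lies on the tangent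
plane at `P` iff `T(P, P, Q) = 0`, and then `P + P + Q` is a three point sum. The tangent planes at
`P` and `P'` meet in a line, on which a real cubic form has a zero; this yields `2[P] = 2[P']`, and
hence `[Q] = [Q']` whenever `P + P + Q` and `P' + P' + Q'` are three point sums. So everything
depends on which points `Q` are *tangential*, that is, admit such a `P`.

If `Q` is not tangential then `T(Q, z, z)` is definite on the tangent plane at `Q`, so `T(P, P, Q)`
does not change sign for `P` near `Q`, and it has the opposite sign where a tangent line at `Q`
meets the surface again. On a connected set containing these points, `T(P, P, Q)` must therefore
vanish at some `P ≠ Q`, a contradiction. In particular all points of a connected surface have the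
same class.

If the surface splits into a non-convex component `A` and an oval `B`, every three point sum has an
even number of terms in `B`, so counting points in `B` modulo 2 is a well-defined homomorphism. All
points of `A` are tangential, hence share one class; two points `P`, `P'` of `B` share a class since
the line through them and the tangent lines at `P` have their third intersections in `A`. For the
parity, fix `p` in `B`. By connectedness of `A`, the line from `p` to a point of `A` always has its
third intersection in `B`, so it is transversal to `A`. The lines through `p` that meet `A` then
form an open and closed family, which is therefore the family of all lines through `p`.
-/

namespace CubicSurf

section PolarForm

section CommRing

variable {R : Type*} [CommRing R] {n d : ℕ} {F : MvPolynomial (Fin n) R}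

lemma pderiv_comm (i j : Fin n) (F : MvPolynomial (Fin n) R) :
    pderiv i (pderiv j F) = pderiv j (pderiv i F) := by
  let D (k : Fin n) : Derivation R (MvPolynomial (Fin n) R) (MvPolynomial (Fin n) R) := pderiv k
  have h : ⁅D i, D j⁆ = 0 := by
    refine MvPolynomial.derivation_ext fun k => ?_
    simp only [D, Derivation.commutator_apply, pderiv_X, Pi.single_apply, Derivation.zero_apply]
    split_ifs <;> simp
  simpa [D, Derivation.commutator_apply, sub_eq_zero] using DFunLike.congr_fun h F

lemma sum_mul_eval_pderiv (hF : F.IsHomogeneous d) (v : Fin n → R) :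
    ∑ i, v i * eval v (pderiv i F) = d * eval v F := by
  simpa using congrArg (eval v) hF.sum_X_mul_pderiv

lemma eval_eq_constantCoeff (hF : F.IsHomogeneous 0) (v : Fin n → R) :
    eval v F = constantCoeff F := by
  simpa [eval_zero] using (eval_smul_of_isHomogeneous hF 0 v).symm

end CommRing

variable {K : Type*} [Field K] {n : ℕ} {F : MvPolynomial (Fin n) K}

/-- The symmetric trilinear form `T` attached to a cubic form `F`, normalised by
`T v v v = F v`: its coefficients are the third partial derivatives of `F`, divided by `6`. -/
def polarForm (F : MvPolynomial (Fin n) K) :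
    (Fin n → K) →ₗ[K] (Fin n → K) →ₗ[K] (Fin n → K) →ₗ[K] K :=
  ∑ i, ∑ j, ∑ k, (constantCoeff (pderiv k (pderiv j (pderiv i F))) / 6) •
    (LinearMap.proj i).smulRight ((LinearMap.proj j).smulRight (LinearMap.proj k))

lemma polarForm_apply (F : MvPolynomial (Fin n) K) (u v w : Fin n → K) :
    polarForm F u v w =
      ∑ i, ∑ j, ∑ k, constantCoeff (pderiv k (pderiv j (pderiv i F))) / 6 *
        (u i * (v j * w k)) := by
  simp [polarForm, LinearMap.sum_apply]

lemma polarForm_swap₁₂ (F : MvPolynomial (Fin n) K) (u v w : Fin n → K) :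
    polarForm F u v w = polarForm F v u w := by
  simp only [polarForm_apply]
  rw [Finset.sum_comm]
  refine Fintype.sum_congr _ _ fun j => Fintype.sum_congr _ _ fun i =>
    Fintype.sum_congr _ _ fun k => ?_
  rw [pderiv_comm j i]
  ring

lemma polarForm_swap₂₃ (F : MvPolynomial (Fin n) K) (u v w : Fin n → K) :
    polarForm F u v w = polarForm F u w v := by
  simp only [polarForm_apply]
  refine Fintype.sum_congr _ _ fun i => ?_
  rw [Finset.sum_comm]
  refine Fintype.sum_congr _ _ fun k => Fintype.sum_congr _ _ fun j => ?_
  rw [pderiv_comm j k]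
  ring

lemma polarForm_smul_smul (F : MvPolynomial (Fin n) K) (a : K) (v w : Fin n → K) :
    polarForm F (a • v) (a • v) w = a ^ 2 * polarForm F v v w := by
  simp only [map_smul, LinearMap.smul_apply, smul_eq_mul]
  ring

lemma polarForm_smul_add_smul_self (F : MvPolynomial (Fin n) K) (s t : K) (u v w : Fin n → K) :
    polarForm F (s • u + t • v) (s • u + t • v) w =
      s ^ 2 * polarForm F u u w + 2 * s * t * polarForm F u v w + t ^ 2 * polarForm F v v w := by
  simp only [map_add, map_smul, LinearMap.add_apply, LinearMap.smul_apply, smul_eq_mul,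
    polarForm_swap₁₂ F v u]
  ring

lemma continuous_polarForm [TopologicalSpace K] [IsTopologicalRing K] {X : Type*}
    [TopologicalSpace X] {f g h : X → Fin n → K} (hf : Continuous f) (hg : Continuous g)
    (hh : Continuous h) : Continuous fun x => polarForm F (f x) (g x) (h x) := by
  simp only [polarForm_apply]
  fun_prop

variable [CharZero K]

lemma polarForm_self (hF : F.IsHomogeneous 3) (v : Fin n → K) :
    polarForm F v v v = eval v F := by
  have euler₁ (i j : Fin n) :
      ∑ k, v k * constantCoeff (pderiv k (pderiv j (pderiv i F))) =
        eval v (pderiv j (pderiv i F)) := by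
    simpa [eval_eq_constantCoeff hF.pderiv.pderiv.pderiv] using
      sum_mul_eval_pderiv (hF.pderiv.pderiv (i := j)) v
  have euler₂ (i : Fin n) :
      ∑ j, v j * eval v (pderiv j (pderiv i F)) = 2 * eval v (pderiv i F) := by
    simpa using sum_mul_eval_pderiv (hF.pderiv (i := i)) v
  calc polarForm F v v v
      = (∑ i, v i * ∑ j, v j *
          ∑ k, v k * constantCoeff (pderiv k (pderiv j (pderiv i F)))) / 6 := by
        simp only [polarForm_apply, Finset.mul_sum, Finset.sum_div]
        refine Fintype.sum_congr _ _ fun i => Fintype.sum_congr _ _ fun j =>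
          Fintype.sum_congr _ _ fun k => ?_
        ring
    _ = 2 * (∑ i, v i * eval v (pderiv i F)) / 6 := by
        simp only [euler₁, euler₂, mul_left_comm _ (2 : K), Finset.mul_sum]
    _ = eval v F := by
        rw [sum_mul_eval_pderiv hF]
        push_cast
        ring

lemma eval_smul_add_smul (hF : F.IsHomogeneous 3) (s t : K) (u v : Fin n → K) :
    eval (s • u + t • v) F = s ^ 3 * eval u F + 3 * s ^ 2 * t * polarForm F u u v +
      3 * s * t ^ 2 * polarForm F u v v + t ^ 3 * eval v F := by
  simp only [← polarForm_self hF, map_add, map_smul, LinearMap.add_apply, LinearMap.smul_apply,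
    smul_eq_mul]
  rw [polarForm_swap₂₃ F u v u, polarForm_swap₁₂ F v u u, polarForm_swap₂₃ F u v u,
    polarForm_swap₁₂ F v u v, polarForm_swap₂₃ F v v u, polarForm_swap₁₂ F v u v]
  ring

lemma polarForm_rep_self (hF : F.IsHomogeneous 3) (P : zeroSet F) :
    polarForm F P.1.rep P.1.rep P.1.rep = 0 :=
  (polarForm_self hF _).trans P.2

end PolarForm

section Lines

variable {K : Type*} [Field K] {n : ℕ} {F : MvPolynomial (Fin n) K}
  {W : Submodule K (Fin n → K)} {u v : Fin n → K}

lemma mk_rep_mem_iff {v : Fin n → K} (hv : v ≠ 0) :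
    (Projectivization.mk K v hv).rep ∈ W ↔ v ∈ W := by
  obtain ⟨a, ha⟩ := Projectivization.exists_smul_eq_mk_rep K v hv
  rw [← ha, Units.smul_def, W.smul_mem_iff a.ne_zero]

lemma isLine_span_pair (huv : LinearIndependent K ![u, v]) :
    IsLine (Submodule.span K {u, v}) := by
  rw [IsLine, ← Matrix.range_cons_cons_empty u v ![], finrank_span_eq_card huv, Fintype.card_fin]

lemma eval_lineRestrict (F : MvPolynomial (Fin n) K) (u v : Fin n → K) (w : Fin 2 → K) :
    eval w (lineRestrict F u v) = eval (w 0 • u + w 1 • v) F := by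
  have h : (eval w).comp (aeval fun i => C (u i) * X 0 + C (v i) * X 1).toRingHom =
      eval (w 0 • u + w 1 • v) :=
    MvPolynomial.ringHom_ext (fun r => by simp) fun i => by simp [mul_comm]
  exact DFunLike.congr_fun h F

lemma lineOnSurf_iff [Infinite K] : LineOnSurf F W ↔ ∀ x ∈ W, eval x F = 0 := by
  refine ⟨fun h x hx => ?_, fun h u v hu hv => MvPolynomial.funext fun w => ?_⟩
  · simpa [h x x hx hx] using (eval_lineRestrict F x x ![1, 0]).symm
  · rw [eval_lineRestrict, map_zero]
    exact h _ (W.add_mem (W.smul_mem _ hu) (W.smul_mem _ hv))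

lemma IsLine.eq_span_pair (hW : IsLine W) (hu : u ∈ W) (hv : v ∈ W)
    (huv : LinearIndependent K ![u, v]) : W = Submodule.span K {u, v} := by
  refine (Submodule.eq_of_le_of_finrank_eq ?_ ?_).symm
  · exact Submodule.span_le.mpr (Set.pair_subset hu hv)
  · exact (isLine_span_pair huv).trans hW.symm

end Lines

section Triples

variable {K : Type*} [Field K] {n : ℕ} {F : MvPolynomial (Fin n) K}
  {W : Submodule K (Fin n → K)}

lemma MeetsIn.eq_of_eval_eq_zero {P Q R : Projectivization K (Fin n → K)}
    (h : MeetsIn F W P Q R) (hW : IsLine W) {x : Fin n → K} (hx : x ∈ W) (hx0 : x ≠ 0)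
    (hFx : eval x F = 0) :
    Projectivization.mk K x hx0 = P ∨ Projectivization.mk K x hx0 = Q ∨
      Projectivization.mk K x hx0 = R := by
  obtain ⟨u, v, hu, hv, huv, c, l, m, hlm, hc, hfac, rfl, rfl, rfl⟩ := h
  obtain ⟨s, t, rfl⟩ := Submodule.mem_span_pair.mp (hW.eq_span_pair hu hv huv ▸ hx)
  have hprod : ∏ k : Fin 3, (m k * s - l k * t) = 0 := by
    have heval := congrArg (eval ![s, t]) hfac
    rw [eval_lineRestrict] at heval
    simpa [hFx, hc, eq_comm, Fin.prod_univ_three] using heval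
  have proportional (k : Fin 3) (hk : m k * s - l k * t = 0) :
      Projectivization.mk K (s • u + t • v) hx0 = Projectivization.mk K _ (hlm k) := by
    rw [Projectivization.mk_eq_mk_iff']
    by_cases hl : l k = 0
    · have hm : m k ≠ 0 := fun hm => hlm k (by simp [hl, hm])
      have hs : s = 0 := by simpa [hl, hm] using hk
      exact ⟨t / m k, by simp [hl, hs, smul_smul, hm]⟩
    · refine ⟨s / l k, ?_⟩
      rw [smul_add, smul_smul, smul_smul, div_mul_cancel₀ _ hl]
      congr 2
      field_simp
      linear_combination hk
  obtain ⟨k, -, hk⟩ := Finset.prod_eq_zero_iff.mp hprod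
  have := proportional k hk
  fin_cases k
  exacts [.inl this, .inr (.inl this), .inr (.inr this)]

lemma MeetsIn.onLine {P Q R : Projectivization K (Fin n → K)} (h : MeetsIn F W P Q R) :
    OnLine W P := by
  obtain ⟨u, v, hu, hv, -, c, l, m, hlm, -, -, rfl, -, -⟩ := h
  exact (mk_rep_mem_iff (hlm 0)).mpr (W.add_mem (W.smul_mem _ hu) (W.smul_mem _ hv))

lemma MeetsIn.swap {P Q R : Projectivization K (Fin n → K)} (h : MeetsIn F W P Q R) :
    MeetsIn F W Q P R := by
  obtain ⟨u, v, hu, hv, huv, c, l, m, hlm, hc, hfac, hP, hQ, hR⟩ := h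
  refine ⟨u, v, hu, hv, huv, c, l ∘ Equiv.swap 0 1, m ∘ Equiv.swap 0 1, fun k => hlm _, hc, ?_,
    hQ, hP, hR⟩
  rw [hfac, ← Equiv.prod_comp (Equiv.swap (0 : Fin 3) 1)]
  rfl

lemma MeetsIn.rotate {P Q R : Projectivization K (Fin n → K)} (h : MeetsIn F W P Q R) :
    MeetsIn F W Q R P := by
  obtain ⟨u, v, hu, hv, huv, c, l, m, hlm, hc, hfac, hP, hQ, hR⟩ := h
  refine ⟨u, v, hu, hv, huv, c, l ∘ finRotate 3, m ∘ finRotate 3, fun k => hlm _, hc, ?_,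
    hQ, hR, hP⟩
  rw [hfac, ← Equiv.prod_comp (finRotate 3)]
  rfl

variable {P Q R : zeroSet F}

lemma TripleRel.swap (h : TripleRel F P Q R) : TripleRel F Q P R := by
  obtain ⟨W, hW, ⟨hS, h⟩ | ⟨hS, hP, hQ, hR⟩⟩ := h
  exacts [⟨W, hW, .inl ⟨hS, h.swap⟩⟩, ⟨W, hW, .inr ⟨hS, hQ, hP, hR⟩⟩]

lemma TripleRel.rotate (h : TripleRel F P Q R) : TripleRel F Q R P := by
  obtain ⟨W, hW, ⟨hS, h⟩ | ⟨hS, hP, hQ, hR⟩⟩ := h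
  exacts [⟨W, hW, .inl ⟨hS, h.rotate⟩⟩, ⟨W, hW, .inr ⟨hS, hQ, hR, hP⟩⟩]

lemma tripleRel_of_eval_eq [Infinite K] {u v : Fin n → K} (huv : LinearIndependent K ![u, v])
    {c : K} {l m : Fin 3 → K}
    (hfac : ∀ s t, eval (s • u + t • v) F = c * ∏ k, (m k * s - l k * t))
    {pt : Fin 3 → zeroSet F}
    (hpt : ∀ k, ∃ h : l k • u + m k • v ≠ 0, Projectivization.mk K _ h = (pt k).1) :
    TripleRel F (pt 0) (pt 1) (pt 2) := by
  have hu : u ∈ Submodule.span K {u, v} := Submodule.mem_span_of_mem (by simp)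
  have hv : v ∈ Submodule.span K {u, v} := Submodule.mem_span_of_mem (by simp)
  choose hlm hpt using hpt
  refine ⟨_, isLine_span_pair huv, ?_⟩
  by_cases hc : c = 0
  · have hrep (k : Fin 3) : OnLine (Submodule.span K {u, v}) (pt k).1 := by
      rw [OnLine, ← hpt, mk_rep_mem_iff]
      exact add_mem (Submodule.smul_mem _ _ hu) (Submodule.smul_mem _ _ hv)
    refine .inr ⟨lineOnSurf_iff.mpr fun x hx => ?_, hrep 0, hrep 1, hrep 2⟩
    obtain ⟨s, t, rfl⟩ := Submodule.mem_span_pair.mp hx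
    rw [hfac, hc, zero_mul]
  · have hpoly : lineRestrict F u v = C c * ∏ k : Fin 3, (C (m k) * X 0 - C (l k) * X 1) :=
      MvPolynomial.funext fun w => by simp [eval_lineRestrict, hfac]
    refine .inl ⟨fun hS => ?_, u, v, hu, hv, huv, c, l, m, hlm, hc, hpoly, hpt 0, hpt 1, hpt 2⟩
    have hprod : ∏ k : Fin 3, (C (m k) * X 0 - C (l k) * X 1 : MvPolynomial (Fin 2) K) = 0 := by
      rw [hS u v hu hv, eq_comm] at hpoly
      exact (mul_eq_zero.mp hpoly).resolve_left (C_ne_zero.mpr hc)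
    obtain ⟨k, -, hk⟩ := Finset.prod_eq_zero_iff.mp hprod
    have hm : m k = 0 := by simpa using congrArg (eval ![1, 0]) hk
    have hl : l k = 0 := by simpa using congrArg (eval ![0, 1]) hk
    exact hlm k (by simp [hm, hl])

/-- The third intersection point of the surface with the line through two of its points `p`, `x`:
on the surface, `F (s • p + t • x) = 3 s t (s T(p, p, x) + t T(p, x, x))`. It vanishes exactly when
the line lies on the surface (or `p`, `x` are proportional). -/
def residual (F : MvPolynomial (Fin n) K) (p x : Fin n → K) : Fin n → K :=
  polarForm F p x x • p + -polarForm F p p x • x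

lemma residual_smul_smul (F : MvPolynomial (Fin n) K) (a b : K) (p x : Fin n → K) :
    residual F (a • p) (b • x) = (a ^ 2 * b ^ 2) • residual F p x := by
  simp only [residual, map_smul, LinearMap.smul_apply, smul_eq_mul, smul_add, smul_smul]
  congr 2 <;> ring

variable [CharZero K]

lemma tripleRel_tangent (hF : F.IsHomogeneous 3) (hPQ : P ≠ Q)
    (h : polarForm F P.1.rep P.1.rep Q.1.rep = 0) : TripleRel F P P Q := by
  have hli := Projectivization.linearIndependent_pair_iff_ne.mpr (Subtype.coe_ne_coe.mpr hPQ)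
  refine tripleRel_of_eval_eq (pt := ![P, P, Q]) hli
    (c := 3 * polarForm F P.1.rep Q.1.rep Q.1.rep) (l := ![1, 1, 0]) (m := ![0, 0, 1]) ?_ ?_
  · intro s t
    have hP : eval P.1.rep F = 0 := P.2
    have hQ : eval Q.1.rep F = 0 := Q.2
    simp only [eval_smul_add_smul hF, Fin.prod_univ_three, h, hP, hQ, Matrix.cons_val]
    ring
  · intro k
    fin_cases k <;> simp [Projectivization.rep_nonzero]

lemma tripleRel_self (hF : F.IsHomogeneous 3) {y : Fin n → K}
    (hli : LinearIndependent K ![P.1.rep, y]) (h₁ : polarForm F P.1.rep P.1.rep y = 0)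
    (h₂ : polarForm F P.1.rep y y = 0) : TripleRel F P P P := by
  refine tripleRel_of_eval_eq (pt := fun _ => P) hli
    (c := -eval y F) (l := fun _ => 1) (m := fun _ => 0) ?_ ?_
  · intro s t
    have hP : eval P.1.rep F = 0 := P.2
    simp only [eval_smul_add_smul hF, Fin.prod_univ_three, h₁, h₂, hP]
    ring
  · intro _
    simp [Projectivization.rep_nonzero]

lemma exists_tripleRel_self_left (hF : F.IsHomogeneous 3) (P : zeroSet F) {y : Fin n → K}
    (hli : LinearIndependent K ![P.1.rep, y]) (h : polarForm F P.1.rep P.1.rep y = 0) :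
    ∃ Q, TripleRel F P P Q ∧ Q.1.rep ∈ Submodule.span K {P.1.rep, y} ∧
      eval y F • P.1.rep + -(3 * polarForm F P.1.rep y y) • y ∈ Submodule.span K {Q.1.rep} := by
  have hP : eval P.1.rep F = 0 := P.2
  set r := eval y F • P.1.rep + -(3 * polarForm F P.1.rep y y) • y with hr
  by_cases hr0 : r = 0
  · have hcoef := LinearIndependent.pair_iff.mp hli _ _ (hr.symm.trans hr0)
    refine ⟨P, tripleRel_self hF hli h (by simpa using hcoef.2), ?_, hr0 ▸ zero_mem _⟩
    exact Submodule.mem_span_of_mem (by simp)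
  · have hrF : eval r F = 0 := by
      rw [hr, eval_smul_add_smul hF, h, hP]
      ring
    have hmem : r ∈ Submodule.span K {P.1.rep, y} := Submodule.mem_span_pair.mpr ⟨_, _, hr.symm⟩
    refine ⟨⟨_, mk_mem_zeroSet hF hr0 hrF⟩, ?_, (mk_rep_mem_iff hr0).mpr hmem, ?_⟩
    · refine tripleRel_of_eval_eq (pt := ![P, P, ⟨_, mk_mem_zeroSet hF hr0 hrF⟩]) hli (c := -1)
        (l := ![1, 1, eval y F]) (m := ![0, 0, -(3 * polarForm F P.1.rep y y)]) ?_ ?_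
      · intro s t
        simp only [eval_smul_add_smul hF, Fin.prod_univ_three, h, hP, Matrix.cons_val]
        ring
      · intro k
        fin_cases k
        exacts [by simp [Projectivization.rep_nonzero], by simp [Projectivization.rep_nonzero],
          ⟨hr0, rfl⟩]
    · rw [← Projectivization.submodule_eq, Projectivization.submodule_mk]
      exact Submodule.mem_span_singleton_self r

lemma eval_residual (hF : F.IsHomogeneous 3) {p x : Fin n → K} (hp : eval p F = 0)
    (hx : eval x F = 0) : eval (residual F p x) F = 0 := by
  rw [residual, eval_smul_add_smul hF, hp, hx]
  ring

lemma exists_tripleRel (hF : F.IsHomogeneous 3) (hPQ : P ≠ Q) : ∃ R, TripleRel F P Q R := by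
  have hli := Projectivization.linearIndependent_pair_iff_ne.mpr (Subtype.coe_ne_coe.mpr hPQ)
  have hP : eval P.1.rep F = 0 := P.2
  have hQ : eval Q.1.rep F = 0 := Q.2
  set r := residual F P.1.rep Q.1.rep
  by_cases hr0 : r = 0
  · obtain ⟨-, h₂⟩ := LinearIndependent.pair_iff.mp hli _ _ hr0
    exact ⟨P, (tripleRel_tangent hF hPQ (neg_eq_zero.mp h₂)).rotate⟩
  · have hrF : eval r F = 0 := eval_residual hF hP hQ
    refine ⟨⟨_, mk_mem_zeroSet hF hr0 hrF⟩, tripleRel_of_eval_eq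
      (pt := ![P, Q, ⟨_, mk_mem_zeroSet hF hr0 hrF⟩]) hli (c := 3)
      (l := ![1, 0, polarForm F P.1.rep Q.1.rep Q.1.rep])
      (m := ![0, 1, -polarForm F P.1.rep P.1.rep Q.1.rep]) ?_ ?_⟩
    · intro s t
      simp only [eval_smul_add_smul hF, Fin.prod_univ_three, hP, hQ, Matrix.cons_val]
      ring
    · intro k
      fin_cases k
      exacts [by simp [Projectivization.rep_nonzero], by simp [Projectivization.rep_nonzero],
        ⟨hr0, rfl⟩]

lemma polarForm_self_left_eq (hF : F.IsHomogeneous 3) {p x : Fin n → K} (hp : eval p F = 0)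
    (hx : eval x F = 0) :
    polarForm F p p x = (eval (p + x) F - eval (p + (-1 : K) • x) F) / 6 := by
  have h₁ := eval_smul_add_smul hF 1 1 p x
  have h₂ := eval_smul_add_smul hF 1 (-1) p x
  rw [one_smul, hp, hx] at h₁ h₂
  rw [one_smul] at h₁
  linear_combination (h₂ - h₁) / 6

lemma polarForm_self_right_eq (hF : F.IsHomogeneous 3) {p x : Fin n → K} (hp : eval p F = 0)
    (hx : eval x F = 0) :
    polarForm F p x x = (eval (p + x) F + eval (p + (-1 : K) • x) F) / 6 := by
  have h₁ := eval_smul_add_smul hF 1 1 p x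
  have h₂ := eval_smul_add_smul hF 1 (-1) p x
  rw [one_smul, hp, hx] at h₁ h₂
  rw [one_smul] at h₁
  linear_combination (-h₁ - h₂) / 6

lemma residual_eq_zero (hF : F.IsHomogeneous 3) (hW : ∀ x ∈ W, eval x F = 0) {p x : Fin n → K}
    (hp : p ∈ W) (hx : x ∈ W) : residual F p x = 0 := by
  rw [residual, polarForm_self_left_eq hF (hW p hp) (hW x hx),
    polarForm_self_right_eq hF (hW p hp) (hW x hx), hW _ (W.add_mem hp hx),
    hW _ (W.add_mem hp (W.smul_mem _ hx))]
  simp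

lemma residual_mem_span_of_eval_eq (hF : F.IsHomogeneous 3) {u v : Fin n → K} {c : K}
    {l m : Fin 3 → K} (hfac : ∀ s t, eval (s • u + t • v) F = c * ∏ k, (m k * s - l k * t)) :
    residual F (l 0 • u + m 0 • v) (l 1 • u + m 1 • v) ∈
      Submodule.span K {l 2 • u + m 2 • v} := by
  have hadd : l 0 • u + m 0 • v + (l 1 • u + m 1 • v) =
      (l 0 + l 1) • u + (m 0 + m 1) • v := by module
  have hsub : l 0 • u + m 0 • v + (-1 : K) • (l 1 • u + m 1 • v) =
      (l 0 - l 1) • u + (m 0 - m 1) • v := by module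
  have hp : eval (l 0 • u + m 0 • v) F = 0 := by
    rw [hfac, Fin.prod_univ_three]
    ring
  have hx : eval (l 1 • u + m 1 • v) F = 0 := by
    rw [hfac, Fin.prod_univ_three]
    ring
  refine Submodule.mem_span_singleton.mpr ⟨-c * (m 0 * l 1 - l 0 * m 1) ^ 3 / 3, ?_⟩
  rw [residual, polarForm_self_left_eq hF hp hx, polarForm_self_right_eq hF hp hx,
    hadd, hsub, hfac, hfac, Fin.prod_univ_three, Fin.prod_univ_three]
  module

lemma TripleRel.residual_mem_span (hF : F.IsHomogeneous 3) (h : TripleRel F P Q R) :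
    residual F P.1.rep Q.1.rep ∈ Submodule.span K {R.1.rep} := by
  obtain ⟨W, -, ⟨-, u, v, -, -, -, c, l, m, hlm, -, hfac, hP, hQ, hR⟩ | ⟨hS, hP, hQ, -⟩⟩ := h
  · obtain ⟨a, ha⟩ := Projectivization.exists_smul_eq_mk_rep K _ (hlm 0)
    obtain ⟨b, hb⟩ := Projectivization.exists_smul_eq_mk_rep K _ (hlm 1)
    rw [← Projectivization.submodule_eq, ← hP, ← hQ, ← hR, Projectivization.submodule_mk, ← ha,
      ← hb, Units.smul_def, Units.smul_def, residual_smul_smul]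
    refine Submodule.smul_mem _ _ (residual_mem_span_of_eval_eq (c := c) hF fun s t => ?_)
    simpa [eval_lineRestrict] using congrArg (eval ![s, t]) hfac
  · rw [residual_eq_zero hF (lineOnSurf_iff.mp hS) hP hQ]
    exact zero_mem _

end Triples

section ClassGroup

variable {K : Type*} [Field K] {n : ℕ} {F : MvPolynomial (Fin n) K}

lemma TripleRel.HClass_add_eq {P Q R P' Q' R' : zeroSet F} (h : TripleRel F P Q R)
    (h' : TripleRel F P' Q' R') :
    HClass F P + HClass F Q + HClass F R = HClass F P' + HClass F Q' + HClass F R' := by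
  refine (QuotientAddGroup.eq_iff_sub_mem (N := Gpp F)).mpr ⟨?_, ?_⟩
  · exact (Gp F).sub_mem (AddSubgroup.subset_closure ⟨P, Q, R, h, rfl⟩)
      (AddSubgroup.subset_closure ⟨P', Q', R', h', rfl⟩)
  · simp [degHom]

lemma H0_le_of_forall_HClass_sub_mem {N : AddSubgroup (HS F)} (c : HS F)
    (h : ∀ P, HClass F P - c ∈ N) : H0 F ≤ N := by
  have sub_deg_mem (x : GS F) : (x : HS F) - degHom F x • c ∈ N := by
    induction x using FreeAbelianGroup.induction_on with
    | zero => simp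
    | of P => simpa [degHom, HClass] using h P
    | neg P hP => simpa [degHom, neg_add_eq_sub, HClass] using neg_mem hP
    | add x y hx hy =>
      convert add_mem hx hy using 1
      rw [map_add, add_smul, QuotientAddGroup.mk_add]
      abel
  intro y hy
  obtain ⟨x, rfl⟩ := QuotientAddGroup.mk_surjective y
  have hx : degHom F x = 0 := hy
  simpa [hx] using sub_deg_mem x

lemma H0_eq_bot (h : ∀ P Q, HClass F P = HClass F Q) : H0 F = ⊥ := by
  refine eq_bot_iff.mpr ?_
  rcases isEmpty_or_nonempty (zeroSet F) with _ | ⟨⟨P₀⟩⟩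
  · exact H0_le_of_forall_HClass_sub_mem 0 isEmptyElim
  · exact H0_le_of_forall_HClass_sub_mem (HClass F P₀) fun P => by simp [h P P₀]

lemma exists_hom_HClass_eq {χ : zeroSet F → ZMod 2}
    (hχ : ∀ P Q R, TripleRel F P Q R → χ P + χ Q + χ R = 0) :
    ∃ f : HS F →+ ZMod 2, ∀ P, f (HClass F P) = χ P := by
  have hker : Gp F ≤ (FreeAbelianGroup.lift χ).ker := by
    refine (AddSubgroup.closure_le _).mpr ?_
    rintro _ ⟨P, Q, R, h, rfl⟩
    simpa [AddMonoidHom.mem_ker] using hχ P Q R h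
  exact ⟨QuotientAddGroup.lift (Gpp F) (FreeAbelianGroup.lift χ) fun x hx => hker hx.1,
    fun P => FreeAbelianGroup.lift_apply_of χ P⟩

lemma H0_le_zmultiples {χ : zeroSet F → ZMod 2} (heq : ∀ P Q, χ P = χ Q → HClass F P = HClass F Q)
    {P₀ P₁ : zeroSet F} (h₀ : χ P₀ = 0) (h₁ : χ P₁ = 1) :
    H0 F ≤ AddSubgroup.zmultiples (HClass F P₁ - HClass F P₀) := by
  refine H0_le_of_forall_HClass_sub_mem (HClass F P₀) fun P => ?_
  rcases (by decide : ∀ a : ZMod 2, a = 0 ∨ a = 1) (χ P) with h | h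
  · simp [heq P P₀ (h.trans h₀.symm)]
  · simp [heq P P₁ (h.trans h₁.symm)]

theorem exists_H0_addEquiv_zmod_two {χ : zeroSet F → ZMod 2}
    (hχ : ∀ P Q R, TripleRel F P Q R → χ P + χ Q + χ R = 0)
    (heq : ∀ P Q, χ P = χ Q → HClass F P = HClass F Q)
    (htwo : ∀ P Q, HClass F P + HClass F P = HClass F Q + HClass F Q)
    {P₀ P₁ : zeroSet F} (h₀ : χ P₀ = 0) (h₁ : χ P₁ = 1) :
    ∃ e : H0 F ≃+ ZMod 2, ∀ P, e (H0diff F P P₀) = χ P := by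
  obtain ⟨f, hf⟩ := exists_hom_HClass_eq hχ
  let g : H0 F →+ ZMod 2 := f.comp (H0 F).subtype
  have hg (P : zeroSet F) : g (H0diff F P P₀) = χ P := by
    rw [AddMonoidHom.comp_apply, AddSubgroup.subtype_apply, H0diff, map_sub, hf, hf, h₀, sub_zero]
  have hd : (HClass F P₁ - HClass F P₀) + (HClass F P₁ - HClass F P₀) = 0 := by
    rw [sub_add_sub_comm, htwo P₁ P₀, sub_self]
  have hinj : Function.Injective g := by
    refine (injective_iff_map_eq_zero g).mpr fun ⟨y, hy⟩ hgy => Subtype.ext ?_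
    obtain ⟨k, rfl⟩ := H0_le_zmultiples heq h₀ h₁ hy
    have hk : ((k : ℤ) : ZMod 2) = 0 := by simpa [g, hf, h₀, h₁] using hgy
    obtain ⟨j, rfl⟩ := (ZMod.intCast_zmod_eq_zero_iff_dvd k 2).mp hk
    simp [mul_comm _ j, mul_smul, two_smul, hd]
  have hsurj : Function.Surjective g := by
    intro a
    obtain ⟨P, rfl⟩ : ∃ P, χ P = a := by
      fin_cases a
      exacts [⟨P₀, h₀⟩, ⟨P₁, h₁⟩]
    exact ⟨_, hg P⟩
  exact ⟨AddEquiv.ofBijective g ⟨hinj, hsurj⟩, hg⟩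

end ClassGroup

section LinearAlgebra

variable {K V : Type*} [Field K] [AddCommGroup V] [Module K V]

lemma two_le_finrank_ker_inf_ker [FiniteDimensional K V] (hV : 4 ≤ Module.finrank K V)
    (f g : V →ₗ[K] K) : 2 ≤ Module.finrank K ↥(f.ker ⊓ g.ker) := by
  have hrange : Module.finrank K (f.prod g).range ≤ 2 := by
    simpa using (f.prod g).range.finrank_le
  have hadd := (f.prod g).finrank_range_add_finrank_ker
  rw [LinearMap.ker_prod] at hadd
  lia

lemma exists_mem_notMem_span_singleton {W : Submodule K V} (hW : 2 ≤ Module.finrank K W) (w : V) :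
    ∃ y ∈ W, y ∉ Submodule.span K {w} := by
  by_contra! h
  have hle := (Submodule.finrank_mono h).trans (finrank_span_le_card {w})
  rw [Set.toFinset_singleton, Finset.card_singleton] at hle
  lia

lemma linearIndependent_pair_of_notMem_span {x y : V} (hx : x ≠ 0)
    (hy : y ∉ Submodule.span K {x}) : LinearIndependent K ![x, y] :=
  (LinearIndependent.pair_iff' hx).mpr fun a h => hy (Submodule.mem_span_singleton.mpr ⟨a, h⟩)

lemma linearIndependent_pair_of_apply_eq_zero {f : V →ₗ[K] K} {x y : V} (hx : f x ≠ 0)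
    (hy : f y = 0) (hy0 : y ≠ 0) : LinearIndependent K ![x, y] := by
  refine linearIndependent_pair_of_notMem_span (fun h => hx (h ▸ map_zero f)) fun hspan => ?_
  obtain ⟨a, rfl⟩ := Submodule.mem_span_singleton.mp hspan
  exact left_ne_zero_of_smul hy0 (by simpa [hx] using hy)

end LinearAlgebra

section RealZeros

lemma exists_ne_zero_eq_zero_of_odd {E : Type*} [AddCommGroup E] [Module ℝ E] [TopologicalSpace E]
    [ContinuousAdd E] [ContinuousSMul ℝ E] (hE : 1 < Module.rank ℝ E) {f : E → ℝ}
    (hf : Continuous f) (hodd : Function.Odd f) : ∃ x ≠ 0, f x = 0 := by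
  have : Nontrivial E := rank_pos_iff_nontrivial.mp (zero_lt_one.trans hE)
  obtain ⟨x, hx⟩ := exists_ne (0 : E)
  wlog hle : f x ≤ 0 generalizing x
  · exact this (-x) (neg_ne_zero.mpr hx) (by rw [hodd]; linarith)
  obtain ⟨y, hy, hy0⟩ := (isConnected_compl_singleton_of_one_lt_rank hE 0).isPreconnected
    |>.intermediate_value hx (neg_ne_zero.mpr hx) hf.continuousOn
    ⟨hle, by rw [hodd]; linarith⟩
  exact ⟨y, hy, hy0⟩

variable {n : ℕ} {F : MvPolynomial (Fin n) ℝ}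

lemma exists_mem_eval_eq_zero {d : ℕ} (hF : F.IsHomogeneous d) (hd : Odd d)
    {W : Submodule ℝ (Fin n → ℝ)} (hW : 2 ≤ Module.finrank ℝ W) :
    ∃ x ∈ W, x ≠ 0 ∧ eval x F = 0 := by
  have hrank : 1 < Module.rank ℝ W := by
    rw [← Module.finrank_eq_rank]
    exact_mod_cast hW
  have hodd : Function.Odd fun x : W => eval (x : Fin n → ℝ) F := fun x => by
    simpa [hd.neg_one_pow] using eval_smul_of_isHomogeneous hF (-1) (x : Fin n → ℝ)
  obtain ⟨x, hx, hFx⟩ := exists_ne_zero_eq_zero_of_odd hrank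
    ((MvPolynomial.continuous_eval F).comp continuous_subtype_val) hodd
  exact ⟨x, x.2, by simpa using hx, hFx⟩

lemma exists_tripleRel_of_tangent_of_not_tangent (hn : 4 ≤ n) (hF : F.IsHomogeneous 3)
    {P P' : zeroSet F} (h : polarForm F P.1.rep P.1.rep P'.1.rep = 0)
    (h' : polarForm F P'.1.rep P'.1.rep P.1.rep ≠ 0) :
    ∃ Q, TripleRel F P P Q ∧ TripleRel F P' P' Q := by
  obtain ⟨y, ⟨hy, hy'⟩, hnot⟩ := exists_mem_notMem_span_singleton
    (two_le_finrank_ker_inf_ker (by simpa using hn) (polarForm F P.1.rep P.1.rep)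
      (polarForm F P'.1.rep P'.1.rep)) P'.1.rep
  obtain ⟨Q, hQ, hspan, -⟩ := exists_tripleRel_self_left hF P'
    (linearIndependent_pair_of_notMem_span P'.1.rep_nonzero hnot) hy'
  have hker : Submodule.span ℝ {P'.1.rep, y} ≤ (polarForm F P.1.rep P.1.rep).ker :=
    Submodule.span_le.mpr (Set.pair_subset h hy)
  have hker' : Submodule.span ℝ {P'.1.rep, y} ≤ (polarForm F P'.1.rep P'.1.rep).ker :=
    Submodule.span_le.mpr (Set.pair_subset (polarForm_rep_self hF P') hy')
  exact ⟨Q, tripleRel_tangent hF (fun hPQ => h' (hPQ ▸ hker' hspan)) (hker hspan), hQ⟩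

lemma exists_tripleRel_of_not_tangent (hn : 4 ≤ n) (hF : F.IsHomogeneous 3)
    {P P' : zeroSet F} (h : polarForm F P.1.rep P.1.rep P'.1.rep ≠ 0)
    (h' : polarForm F P'.1.rep P'.1.rep P.1.rep ≠ 0) :
    ∃ Q, TripleRel F P P Q ∧ TripleRel F P' P' Q := by
  obtain ⟨x, ⟨hx, hx'⟩, hx0, hFx⟩ := exists_mem_eval_eq_zero hF (by decide)
    (two_le_finrank_ker_inf_ker (by simpa using hn) (polarForm F P.1.rep P.1.rep)
      (polarForm F P'.1.rep P'.1.rep))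
  let Q : zeroSet F := ⟨_, mk_mem_zeroSet hF hx0 hFx⟩
  have hQ : polarForm F P.1.rep P.1.rep Q.1.rep = 0 := (mk_rep_mem_iff hx0).mpr hx
  have hQ' : polarForm F P'.1.rep P'.1.rep Q.1.rep = 0 := (mk_rep_mem_iff hx0).mpr hx'
  exact ⟨Q, tripleRel_tangent hF (fun hPQ => h' (hPQ ▸ hQ')) hQ,
    tripleRel_tangent hF (fun hPQ => h (hPQ ▸ hQ)) hQ'⟩

lemma exists_tripleRel_self (hn : 4 ≤ n) (hF : F.IsHomogeneous 3) (P : zeroSet F) :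
    ∃ Q, TripleRel F P P Q := by
  obtain ⟨y, ⟨hy, -⟩, hnot⟩ := exists_mem_notMem_span_singleton
    (two_le_finrank_ker_inf_ker (by simpa using hn) (polarForm F P.1.rep P.1.rep) 0) P.1.rep
  obtain ⟨Q, hQ, -⟩ := exists_tripleRel_self_left hF P
    (linearIndependent_pair_of_notMem_span P.1.rep_nonzero hnot) hy
  exact ⟨Q, hQ⟩

lemma exists_common_tripleRel_self (hn : 4 ≤ n) (hF : F.IsHomogeneous 3) (P P' : zeroSet F) :
    ∃ Q, TripleRel F P P Q ∧ TripleRel F P' P' Q := by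
  by_cases hPP' : P = P'
  · simpa [hPP'] using exists_tripleRel_self hn hF P'
  by_cases h : polarForm F P.1.rep P.1.rep P'.1.rep = 0 <;>
    by_cases h' : polarForm F P'.1.rep P'.1.rep P.1.rep = 0
  · have hli := Projectivization.linearIndependent_pair_iff_ne.mpr (Subtype.coe_ne_coe.mpr hPP')
    refine ⟨P, tripleRel_self hF hli h ?_, tripleRel_tangent hF (Ne.symm hPP') h'⟩
    rwa [polarForm_swap₁₂, polarForm_swap₂₃]
  · exact exists_tripleRel_of_tangent_of_not_tangent hn hF h h'
  · obtain ⟨Q, hQ', hQ⟩ := exists_tripleRel_of_tangent_of_not_tangent hn hF h' h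
    exact ⟨Q, hQ, hQ'⟩
  · exact exists_tripleRel_of_not_tangent hn hF h h'

lemma HClass_add_self_eq (hn : 4 ≤ n) (hF : F.IsHomogeneous 3) (P P' : zeroSet F) :
    HClass F P + HClass F P = HClass F P' + HClass F P' := by
  obtain ⟨Q, h, h'⟩ := exists_common_tripleRel_self hn hF P P'
  exact add_right_cancel (h.HClass_add_eq h')

lemma TripleRel.HClass_eq_of_self (hn : 4 ≤ n) (hF : F.IsHomogeneous 3) {P P' Q Q' : zeroSet F}
    (h : TripleRel F P P Q) (h' : TripleRel F P' P' Q') : HClass F Q = HClass F Q' :=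
  add_left_cancel ((h.HClass_add_eq h').trans (by rw [HClass_add_self_eq hn hF P P']))

end RealZeros

local instance instTopologicalSpaceProjectivization (K : Type*) [Field K] [TopologicalSpace K]
    (n : ℕ) : TopologicalSpace (Projectivization K (Fin n → K)) :=
  projTop K n

section AffineCone

variable {K : Type*} [Field K] {n d : ℕ} {F : MvPolynomial (Fin n) K} {A : Set (zeroSet F)}
  {v : Fin n → K}

/-- The affine cone in `Kⁿ` over a set `A` of rational points of the hypersurface `F = 0`. The
origin is always included, so that the cone over a closed set is closed. -/
def affineCone (A : Set (zeroSet F)) : Set (Fin n → K) :=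
  {v | ∀ hv : v ≠ 0, Projectivization.mk K v hv ∈ Subtype.val '' A}

lemma smul_mem_affineCone_iff {a : K} (ha : a ≠ 0) : a • v ∈ affineCone A ↔ v ∈ affineCone A := by
  have hmk (hav : a • v ≠ 0) (hv : v ≠ 0) :
      Projectivization.mk K (a • v) hav = Projectivization.mk K v hv :=
    (Projectivization.mk_eq_mk_iff' K _ _ _ _).mpr ⟨a, rfl⟩
  exact ⟨fun h hv => hmk (smul_ne_zero ha hv) hv ▸ h (smul_ne_zero ha hv),
    fun h hav => hmk hav (right_ne_zero_of_smul hav) ▸ h _⟩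

lemma smul_mem_affineCone (a : K) (hv : v ∈ affineCone A) : a • v ∈ affineCone A := by
  rcases eq_or_ne a 0 with rfl | ha
  · exact fun h => absurd (zero_smul K v) h
  · exact (smul_mem_affineCone_iff ha).mpr hv

lemma rep_mem_affineCone {P : zeroSet F} : P.1.rep ∈ affineCone A ↔ P ∈ A := by
  refine ⟨fun h => ?_, fun h hv => ⟨P, h, P.1.mk_rep.symm⟩⟩
  obtain ⟨Q, hQ, hQP⟩ := h P.1.rep_nonzero
  rwa [← Subtype.ext (hQP.trans P.1.mk_rep)]

lemma exists_smul_rep_eq (hv : v ∈ affineCone A) (hv0 : v ≠ 0) :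
    ∃ P ∈ A, ∃ a : K, a ≠ 0 ∧ a • P.1.rep = v := by
  obtain ⟨P, hP, hPv⟩ := hv hv0
  obtain ⟨a, ha⟩ := Projectivization.exists_smul_eq_mk_rep K v hv0
  exact ⟨P, hP, (a⁻¹ : Kˣ), (a⁻¹).ne_zero, by rw [hPv, ← ha, ← Units.smul_def, inv_smul_smul]⟩

lemma eval_eq_zero_of_mem_affineCone (hF : F.IsHomogeneous d) (hd : d ≠ 0)
    (hv : v ∈ affineCone A) : eval v F = 0 := by
  rcases eq_or_ne v 0 with rfl | hv0
  · simpa [hd] using eval_smul_of_isHomogeneous hF 0 (0 : Fin n → K)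
  · obtain ⟨P, -, a, -, rfl⟩ := exists_smul_rep_eq hv hv0
    rw [eval_smul_of_isHomogeneous hF, P.2, mul_zero]

lemma mem_affineCone_or_compl (hF : F.IsHomogeneous d) (A : Set (zeroSet F))
    (hv : eval v F = 0) : v ∈ affineCone A ∨ v ∈ affineCone Aᶜ := by
  refine or_iff_not_imp_left.mpr fun h hv0 => ⟨⟨_, mk_mem_zeroSet hF hv0 hv⟩, fun hA => ?_, rfl⟩
  exact h fun _ => ⟨_, hA, rfl⟩

lemma eq_zero_of_mem_affineCone_of_mem_compl (hv : v ∈ affineCone A) (hv' : v ∈ affineCone Aᶜ) :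
    v = 0 := by
  by_contra hv0
  obtain ⟨P, hP, hPv⟩ := hv hv0
  obtain ⟨Q, hQ, hQv⟩ := hv' hv0
  exact hQ (Subtype.ext (hQv.trans hPv.symm) ▸ hP)

variable [TopologicalSpace K]

lemma isClosed_affineCone [IsTopologicalRing K] [T1Space K] (hF : F.IsHomogeneous d) (hd : d ≠ 0)
    (hA : IsClosed A) : IsClosed (affineCone A) := by
  obtain ⟨U, hU, rfl⟩ := isClosed_induced_iff.mp hA
  have hcone : affineCone (Subtype.val ⁻¹' U : Set (zeroSet F)) = {v | eval v F = 0} ∩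
      (Subtype.val '' {v : {v : Fin n → K // v ≠ 0} | Projectivization.mk K v.1 v.2 ∈ Uᶜ})ᶜ := by
    ext v
    refine ⟨fun hv => ⟨eval_eq_zero_of_mem_affineCone hF hd hv, ?_⟩, fun ⟨hFv, hv⟩ hv0 =>
      ⟨⟨_, mk_mem_zeroSet hF hv0 hFv⟩, not_not.mp fun hU => hv ⟨⟨v, hv0⟩, hU, rfl⟩, rfl⟩⟩
    rintro ⟨v, hvU, rfl⟩
    obtain ⟨P, hP, hPv⟩ := hv v.2
    exact hvU (hPv ▸ hP)
  rw [hcone]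
  refine (isClosed_singleton.preimage (MvPolynomial.continuous_eval F)).inter ?_
  exact (isOpen_compl_singleton.isOpenEmbedding_subtypeVal.isOpenMap _
    (isOpen_coinduced.mp hU.isOpen_compl)).isClosed_compl

lemma isClosed_setOf_rep_mem {C : Set (Fin n → K)} (hC : IsClosed C)
    (hsmul : ∀ a : Kˣ, ∀ v ∈ C, a • v ∈ C) : IsClosed {P : zeroSet F | P.1.rep ∈ C} := by
  have hpre : (fun v : {v : Fin n → K // v ≠ 0} => Projectivization.mk K v.1 v.2) ⁻¹'
      {P | P.rep ∈ C} = Subtype.val ⁻¹' C := by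
    ext ⟨v, hv⟩
    obtain ⟨a, ha⟩ := Projectivization.exists_smul_eq_mk_rep K v hv
    refine ⟨fun h => ?_, fun h => show _ ∈ C from ha ▸ hsmul a v h⟩
    simpa [ha.symm] using hsmul a⁻¹ _ h
  have hclosed : IsClosed {P : Projectivization K (Fin n → K) | P.rep ∈ C} :=
    isClosed_coinduced.mpr (hpre ▸ hC.preimage continuous_subtype_val)
  exact hclosed.preimage continuous_subtype_val

end AffineCone

open Filter Topology

section TangentialPoints

lemma exists_forall_mul_pos {E : Type*} [AddCommGroup E] [Module ℝ E] [TopologicalSpace E]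
    [ContinuousAdd E] [ContinuousSMul ℝ E] (hE : 1 < Module.rank ℝ E) {f : E → ℝ}
    (hf : Continuous f) (h0 : ∀ x ≠ 0, f x ≠ 0) : ∃ ε : ℝ, ∀ x ≠ 0, 0 < ε * f x := by
  have : Nontrivial E := rank_pos_iff_nontrivial.mp (zero_lt_one.trans hE)
  obtain ⟨x₀, hx₀⟩ := exists_ne (0 : E)
  refine ⟨f x₀, fun x hx => ?_⟩
  by_contra! hle
  have hpos : 0 ≤ f x₀ * f x₀ := mul_self_nonneg _
  obtain ⟨y, hy, hy0⟩ := (isConnected_compl_singleton_of_one_lt_rank hE 0).isPreconnected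
    |>.intermediate_value hx hx₀ (continuous_const.mul hf).continuousOn ⟨hle, hpos⟩
  exact mul_ne_zero (h0 x₀ hx₀) (h0 y hy) hy0

variable {n : ℕ} {F : MvPolynomial (Fin n) ℝ} {w : Fin n → ℝ}

lemma eventually_forall_mem_polarForm_pos {s : Set (Fin n → ℝ)} (hs : IsCompact s) {ε : ℝ}
    (hpos : ∀ z ∈ s, polarForm F w w z = 0 → 0 < ε * polarForm F w z z) :
    ∀ᶠ r : ℝ in 𝓝 0, ∀ z ∈ s,
      3 * polarForm F w w z + 3 * r * polarForm F w z z + r ^ 2 * eval z F = 0 →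
        0 < ε * (3 * polarForm F w z z + 2 * r * eval z F) := by
  have hT : Continuous fun q : ℝ × (Fin n → ℝ) => polarForm F w q.2 q.2 :=
    continuous_polarForm continuous_const continuous_snd continuous_snd
  have hT' : Continuous fun q : ℝ × (Fin n → ℝ) => polarForm F w w q.2 :=
    continuous_polarForm continuous_const continuous_const continuous_snd
  have hF : Continuous fun q : ℝ × (Fin n → ℝ) => eval q.2 F :=
    (MvPolynomial.continuous_eval F).comp continuous_snd
  have ha : Continuous fun q : ℝ × (Fin n → ℝ) =>
      3 * polarForm F w w q.2 + 3 * q.1 * polarForm F w q.2 q.2 + q.1 ^ 2 * eval q.2 F := by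
    fun_prop
  have hb : Continuous fun q : ℝ × (Fin n → ℝ) =>
      ε * (3 * polarForm F w q.2 q.2 + 2 * q.1 * eval q.2 F) := by fun_prop
  refine hs.eventually_forall_of_forall_eventually fun z hz => ?_
  by_cases hz0 : polarForm F w w z = 0
  · have hbz : ∀ᶠ q in 𝓝 ((0 : ℝ), z), 0 < ε * (3 * polarForm F w q.2 q.2 +
        2 * q.1 * eval q.2 F) :=
      hb.continuousAt.eventually_const_lt (by linarith [hpos z hz hz0])
    exact hbz.mono fun _ hq _ => hq
  · have haz : ∀ᶠ q in 𝓝 ((0 : ℝ), z), 3 * polarForm F w w q.2 +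
        3 * q.1 * polarForm F w q.2 q.2 + q.1 ^ 2 * eval q.2 F ≠ 0 :=
      ha.continuousAt.eventually_ne (by simpa)
    exact haz.mono fun _ hq h => absurd h hq

lemma add_add_eq_zero_of_eval_add_smul_eq_zero (hF : F.IsHomogeneous 3) (hw : eval w F = 0) {r : ℝ}
    (hr : r ≠ 0) {z : Fin n → ℝ} (h : eval (w + r • z) F = 0) :
    3 * polarForm F w w z + 3 * r * polarForm F w z z + r ^ 2 * eval z F = 0 := by
  have hexpand := eval_smul_add_smul hF 1 r w z
  rw [one_smul, h, hw] at hexpand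
  exact (mul_eq_zero.mp (show r * _ = 0 by linear_combination -hexpand)).resolve_left hr

lemma eventually_polarForm_add_nonpos (hF : F.IsHomogeneous 3) (hw : eval w F = 0)
    {ψ : (Fin n → ℝ) →ₗ[ℝ] ℝ} {ε : ℝ}
    (hpos : ∀ z ≠ 0, ψ z = 0 → polarForm F w w z = 0 → 0 < ε * polarForm F w z z) :
    ∀ᶠ u in 𝓝 0, ψ u = 0 → eval (w + u) F = 0 → ε * polarForm F (w + u) (w + u) w ≤ 0 := by
  have hcompact : IsCompact (Metric.sphere (0 : Fin n → ℝ) 1 ∩ {z | ψ z = 0}) :=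
    (isCompact_sphere 0 1).inter_right
      (isClosed_singleton.preimage ψ.continuous_of_finiteDimensional)
  have hsphere := eventually_forall_mem_polarForm_pos (F := F) (w := w) hcompact fun z hz =>
    hpos z (ne_zero_of_mem_unit_sphere ⟨z, hz.1⟩) hz.2
  filter_upwards [(continuous_norm.tendsto' (0 : Fin n → ℝ) 0 norm_zero).eventually hsphere]
    with u hu hψ hFu
  have hww : polarForm F w w w = 0 := (polarForm_self hF w).trans hw
  rcases eq_or_ne u 0 with rfl | hu0
  · simp [hww]
  have hr : ‖u‖ ≠ 0 := norm_ne_zero_iff.mpr hu0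
  obtain ⟨z, hz, hzu⟩ : ∃ z, ‖z‖ = 1 ∧ u = ‖u‖ • z :=
    ⟨‖u‖⁻¹ • u, by rw [norm_smul, norm_inv, norm_norm, inv_mul_cancel₀ hr],
      (smul_inv_smul₀ hr u).symm⟩
  have hψz : ψ z = 0 := by
    rw [hzu, map_smul, smul_eq_mul] at hψ
    exact (mul_eq_zero.mp hψ).resolve_left hr
  have hfactor := add_add_eq_zero_of_eval_add_smul_eq_zero hF hw hr (hzu ▸ hFu)
  have hform := polarForm_smul_add_smul_self F 1 ‖u‖ w z w
  rw [one_smul, ← hzu, hww, polarForm_swap₂₃ F w z w, polarForm_swap₂₃ F z z w,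
    polarForm_swap₁₂ F z w z] at hform
  have hneg : 3 * (ε * polarForm F (w + u) (w + u) w) =
      -(‖u‖ ^ 2 * (ε * (3 * polarForm F w z z + 2 * ‖u‖ * eval z F))) := by
    linear_combination 3 * ε * hform + 2 * ‖u‖ * ε * hfactor
  linarith [mul_pos (sq_pos_of_ne_zero hr) (hu z ⟨by simpa using hz, hψz⟩ hfactor)]

lemma eventually_polarForm_nonpos (hF : F.IsHomogeneous 3) (hw : eval w F = 0)
    {ψ : (Fin n → ℝ) →ₗ[ℝ] ℝ} (hψ : ψ w = 1) {ε : ℝ}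
    (hpos : ∀ z ≠ 0, ψ z = 0 → polarForm F w w z = 0 → 0 < ε * polarForm F w z z) :
    ∀ᶠ v in 𝓝 w, eval v F = 0 → ε * polarForm F v v w ≤ 0 := by
  have hcont : Continuous ψ := ψ.continuous_of_finiteDimensional
  have hne : ∀ᶠ v in 𝓝 w, ψ v ≠ 0 := hcont.continuousAt.eventually_ne (by simp [hψ])
  have htendsto : Tendsto (fun v => (ψ v)⁻¹ • v - w) (𝓝 w) (𝓝 0) := by
    have hsmul := ((hcont.tendsto w).inv₀ (by simp [hψ])).smul (tendsto_id (x := 𝓝 w))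
    simpa [hψ] using hsmul.sub_const w
  filter_upwards [hne, htendsto.eventually (eventually_polarForm_add_nonpos hF hw hpos)]
    with v hv hle hFv
  rw [add_sub_cancel, eval_smul_of_isHomogeneous hF, hFv, mul_zero] at hle
  have hle' := hle (by simp [hψ, hv]) rfl
  rw [polarForm_smul_smul, mul_left_comm] at hle'
  exact nonpos_of_mul_nonpos_right hle' (sq_pos_of_ne_zero (inv_ne_zero hv))

lemma exists_sign_polarForm (hn : 4 ≤ n) {ψ : (Fin n → ℝ) →ₗ[ℝ] ℝ}
    (h0 : ∀ z ≠ 0, ψ z = 0 → polarForm F w w z = 0 → polarForm F w z z ≠ 0) :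
    ∃ ε : ℝ, ∀ z ≠ 0, ψ z = 0 → polarForm F w w z = 0 → 0 < ε * polarForm F w z z := by
  have hrank : 1 < Module.rank ℝ ↥(ψ.ker ⊓ (polarForm F w w).ker) := by
    rw [← Module.finrank_eq_rank]
    exact_mod_cast two_le_finrank_ker_inf_ker (by simpa using hn) ψ (polarForm F w w)
  obtain ⟨ε, hε⟩ := exists_forall_mul_pos hrank
    (f := fun z => polarForm F w z z)
    (continuous_polarForm continuous_const continuous_subtype_val continuous_subtype_val)
    fun z hz => h0 z (by simpa using hz) z.2.1 z.2.2
  exact ⟨ε, fun z hz hψz hwz => hε ⟨z, hψz, hwz⟩ (by simpa [Subtype.ext_iff])⟩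

lemma exists_tripleRel_self_polarForm_pos (hn : 4 ≤ n) (hF : F.IsHomogeneous 3) (Q : zeroSet F)
    {ψ : (Fin n → ℝ) →ₗ[ℝ] ℝ} (hψ : ψ Q.1.rep = 1) {ε : ℝ}
    (hpos : ∀ z ≠ 0, ψ z = 0 → polarForm F Q.1.rep Q.1.rep z = 0 →
      0 < ε * polarForm F Q.1.rep z z) :
    ∃ R, TripleRel F Q Q R ∧ 0 < ε * polarForm F R.1.rep R.1.rep Q.1.rep := by
  obtain ⟨y, ⟨hψy, hy⟩, hy0⟩ := exists_mem_notMem_span_singleton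
    (two_le_finrank_ker_inf_ker (by simpa using hn) ψ (polarForm F Q.1.rep Q.1.rep)) 0
  rw [Submodule.span_zero_singleton, Submodule.mem_bot] at hy0
  have hli := linearIndependent_pair_of_apply_eq_zero (hψ ▸ one_ne_zero) hψy hy0
  obtain ⟨R, hR, -, hspan⟩ := exists_tripleRel_self_left hF Q hli hy
  obtain ⟨c, hc⟩ := Submodule.mem_span_singleton.mp hspan
  set b := polarForm F Q.1.rep y y
  have hform := polarForm_smul_add_smul_self F (eval y F) (-(3 * b)) Q.1.rep y Q.1.rep
  rw [← hc, polarForm_rep_self hF, polarForm_swap₂₃ F _ y Q.1.rep, LinearMap.mem_ker.mp hy,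
    polarForm_swap₂₃ F y y, polarForm_swap₁₂ F y] at hform
  rw [polarForm_smul_smul] at hform
  have hb : 0 < ε * b := hpos y hy0 hψy hy
  have hb0 : b ≠ 0 := right_ne_zero_of_mul hb.ne'
  refine ⟨R, hR, pos_of_mul_pos_right (a := c ^ 2) ?_ (sq_nonneg c)⟩
  calc 0 < 9 * b ^ 2 * (ε * b) := mul_pos (by positivity) hb
    _ = c ^ 2 * (ε * polarForm F R.1.rep R.1.rep Q.1.rep) := by linear_combination -ε * hform

lemma isClosed_setOf_mul_polarForm_nonpos (F : MvPolynomial (Fin n) ℝ) (ε : ℝ) (w : Fin n → ℝ) :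
    IsClosed {P : zeroSet F | ε * polarForm F P.1.rep P.1.rep w ≤ 0} := by
  refine isClosed_setOf_rep_mem (C := {v | ε * polarForm F v v w ≤ 0}) ?_ fun a v hv => ?_
  · exact isClosed_le (continuous_const.mul
      (continuous_polarForm continuous_id continuous_id continuous_const)) continuous_const
  · rw [Set.mem_ofPred_eq, Units.smul_def, polarForm_smul_smul, mul_left_comm]
    exact mul_nonpos_of_nonneg_of_nonpos (sq_nonneg _) hv

lemma isClosed_setOf_rep_mem_closure_polarForm_pos (hF : F.IsHomogeneous 3) (ε : ℝ)
    (w : Fin n → ℝ) :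
    IsClosed {P : zeroSet F |
      P.1.rep ∈ closure {v | eval v F = 0 ∧ 0 < ε * polarForm F v v w}} := by
  refine isClosed_setOf_rep_mem isClosed_closure fun a v hv => ?_
  refine map_mem_closure (continuous_const_smul a) hv fun v ⟨hFv, hv⟩ => ⟨?_, ?_⟩
  · rw [Units.smul_def, eval_smul_of_isHomogeneous hF, hFv, mul_zero]
  · rw [Units.smul_def, polarForm_smul_smul, mul_left_comm]
    exact mul_pos (sq_pos_of_ne_zero a.ne_zero) hv

theorem exists_tripleRel_self_right (hn : 4 ≤ n) (hF : F.IsHomogeneous 3) {s : Set (zeroSet F)}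
    (hs : IsPreconnected s) {Q : zeroSet F} (hQ : Q ∈ s) (hQs : ∀ R, TripleRel F Q Q R → R ∈ s) :
    ∃ P, TripleRel F P P Q := by
  by_contra! hnone
  obtain ⟨ψ, hψ⟩ := SeparatingDual.exists_eq_one (R := ℝ) Q.1.rep_nonzero
  obtain ⟨ε, hε⟩ := exists_sign_polarForm (F := F) (w := Q.1.rep) (ψ := ψ.toLinearMap) hn
    fun z hz hψz hwz hwzz => hnone Q (tripleRel_self hF
      (linearIndependent_pair_of_apply_eq_zero (f := ψ.toLinearMap) (by simp [hψ]) hψz hz) hwz hwzz)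
  obtain ⟨R, hR, hRpos⟩ := exists_tripleRel_self_polarForm_pos hn hF Q hψ hε
  obtain ⟨P, -, hPle, hPcl⟩ := isPreconnected_closed_iff.mp hs _ _
    (isClosed_setOf_mul_polarForm_nonpos F ε Q.1.rep)
    (isClosed_setOf_rep_mem_closure_polarForm_pos hF ε Q.1.rep)
    (fun P _ => or_iff_not_imp_left.mpr fun h => subset_closure ⟨P.2, not_le.mp h⟩)
    ⟨Q, hQ, by simp [polarForm_rep_self hF]⟩ ⟨R, hQs R hR, subset_closure ⟨R.2, hRpos⟩⟩
  have hPQ : P ≠ Q := by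
    rintro rfl
    obtain ⟨v, ⟨hFv, hv⟩, hle⟩ := (mem_closure_iff_frequently.mp hPcl).and_eventually
      (eventually_polarForm_nonpos hF P.2 hψ hε) |>.exists
    exact hv.not_ge (hle hFv)
  have hPge : 0 ≤ ε * polarForm F P.1.rep P.1.rep Q.1.rep :=
    closure_minimal (t := {v | 0 ≤ ε * polarForm F v v Q.1.rep}) (fun v hv => hv.2.le)
      (isClosed_le continuous_const (continuous_const.mul
        (continuous_polarForm continuous_id continuous_id continuous_const))) hPcl
  exact hnone P (tripleRel_tangent hF hPQ
    ((mul_eq_zero.mp (hPle.antisymm hPge)).resolve_left (left_ne_zero_of_mul hRpos.ne')))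

end TangentialPoints

section Cones

lemma isClosed_image_of_isClosed_cone {E E' : Type*} [NormedAddCommGroup E] [NormedSpace ℝ E]
    [FiniteDimensional ℝ E] [NormedAddCommGroup E'] [NormedSpace ℝ E'] {C : Set E}
    (hC : IsClosed C) (hsmul : ∀ a : ℝ, ∀ v ∈ C, a • v ∈ C) (L : E →L[ℝ] E')
    (hL : ∀ v ∈ C, L v = 0 → v = 0) : IsClosed (L '' C) := by
  obtain ⟨c, hc, hle⟩ := ((isCompact_sphere (0 : E) 1).inter_right hC).exists_forall_le'
    (f := fun v => ‖L v‖) (a := 0) (by fun_prop) fun v ⟨hv, hvC⟩ =>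
      norm_pos_iff.mpr fun h0 => ne_zero_of_mem_unit_sphere ⟨v, hv⟩ (hL v hvC h0)
  have hbound {v : E} (hv : v ∈ C) : c * ‖v‖ ≤ ‖L v‖ := by
    rcases eq_or_ne v 0 with rfl | hv0
    · simp
    · have hunit := hle (‖v‖⁻¹ • v) ⟨by simp [norm_smul, hv0], hsmul _ _ hv⟩
      rwa [map_smul, norm_smul, norm_inv, norm_norm, le_inv_mul_iff₀' (norm_pos_iff.mpr hv0)]
        at hunit
  have htendsto : Tendsto (fun v : C => L v) (cocompact C) (cocompact E') := by
    refine Tendsto.mono_right ?_ Metric.cobounded_le_cocompact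
    refine tendsto_norm_atTop_iff_cobounded.mp
      (tendsto_atTop_mono (fun v : C => hbound v.2) (Tendsto.const_mul_atTop hc ?_))
    exact tendsto_norm_cocompact_atTop.comp hC.isClosedEmbedding_subtypeVal.tendsto_cocompact
  have hproper : IsProperMap (fun v : C => L v) :=
    isProperMap_iff_tendsto_cocompact.mpr ⟨by fun_prop, htendsto⟩
  rw [Set.image_eq_range]
  exact hproper.isClosed_range

lemma eventually_exists_eq_zero_of_deriv_ne_zero {X : Type*} [TopologicalSpace X] {f : X × ℝ → ℝ}
    (hf : Continuous f) {x : X} {t : ℝ} {s : Set (X × ℝ)} (hs : s ∈ 𝓝 (x, t))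
    (h0 : f (x, t) = 0) (hderiv : deriv (fun r => f (x, r)) t ≠ 0) :
    ∀ᶠ z in 𝓝 x, ∃ r, (z, r) ∈ s ∧ f (z, r) = 0 := by
  wlog hpos : 0 < deriv (fun r => f (x, r)) t generalizing f
  · simpa using this hf.neg (by simpa using h0) (by simpa using hderiv)
      (by simpa using (not_lt.mp hpos).lt_of_ne hderiv)
  obtain ⟨u, hu, v, hv, huv⟩ := mem_nhds_prod_iff.mp hs
  obtain ⟨ε, hε, hball⟩ := Metric.eventually_nhds_iff_ball.mp
    ((eventually_nhdsWithin_sign_eq_of_deriv_pos hpos h0).and hv)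
  have hmem {r : ℝ} (hr : r ∈ Set.Icc (t - ε / 2) (t + ε / 2)) : r ∈ Metric.ball t ε := by
    rw [Real.ball_eq_Ioo]
    constructor <;> linarith [hr.1, hr.2]
  have hle : t - ε / 2 ≤ t + ε / 2 := by linarith
  have hneg : f (x, t - ε / 2) < 0 := by
    rw [← sign_eq_neg_one_iff, (hball _ (hmem ⟨le_rfl, hle⟩)).1]
    exact sign_neg (by linarith)
  have hpos : 0 < f (x, t + ε / 2) := by
    rw [← sign_eq_one_iff, (hball _ (hmem ⟨hle, le_rfl⟩)).1]
    exact sign_pos (by linarith)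
  have hcont (r : ℝ) : Continuous fun z => f (z, r) := by fun_prop
  filter_upwards [hu, (hcont _).continuousAt.eventually_lt_const hneg,
    (hcont _).continuousAt.eventually_const_lt hpos] with z hz hzneg hzpos
  obtain ⟨r, hr, hr0⟩ := intermediate_value_Icc hle (f := fun r => f (z, r)) (by fun_prop)
    ⟨hzneg.le, hzpos.le⟩
  exact ⟨r, huv ⟨hz, (hball r (hmem hr)).2⟩, hr0⟩

end Cones

section Pseudoplane

variable {n : ℕ} {F : MvPolynomial (Fin n) ℝ} {A : Set (zeroSet F)} {p x : Fin n → ℝ}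

lemma linearIndependent_of_mem_affineCone (hp : p ∈ affineCone Aᶜ) (hx : x ∈ affineCone A)
    (hp0 : p ≠ 0) (hx0 : x ≠ 0) : LinearIndependent ℝ ![p, x] := by
  refine linearIndependent_pair_of_notMem_span hp0 fun hspan => ?_
  obtain ⟨a, rfl⟩ := Submodule.mem_span_singleton.mp hspan
  exact hx0 (eq_zero_of_mem_affineCone_of_mem_compl hx (smul_mem_affineCone a hp))

lemma exists_mem_eval_ne_zero {d : ℕ} (hF : F.IsHomogeneous d) (hd : d ≠ 0) (hA : IsClopen A)
    (hp : p ∈ affineCone Aᶜ) (hx : x ∈ affineCone A) (hp0 : p ≠ 0) (hx0 : x ≠ 0)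
    {W : Submodule ℝ (Fin n → ℝ)} (hpW : p ∈ W) (hxW : x ∈ W) : ∃ y ∈ W, eval y F ≠ 0 := by
  by_contra! hW
  obtain ⟨v, ⟨a, b, -, -, hab, rfl⟩, hv, hv'⟩ :=
    isPreconnected_closed_iff.mp (convex_segment p x).isPreconnected _ _
      (isClosed_affineCone hF hd hA.isClosed) (isClosed_affineCone hF hd hA.compl.isClosed)
      (fun v hv => mem_affineCone_or_compl hF A (hW v (W.convex.segment_subset hpW hxW hv)))
      ⟨x, right_mem_segment ℝ p x, hx⟩ ⟨p, left_mem_segment ℝ p x, hp⟩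
  obtain ⟨rfl, rfl⟩ := LinearIndependent.pair_iff.mp
    (linearIndependent_of_mem_affineCone hp hx hp0 hx0) a b
    (eq_zero_of_mem_affineCone_of_mem_compl hv hv')
  simp at hab

lemma residual_ne_zero (hF : F.IsHomogeneous 3) (hA : IsClopen A)
    (hp : p ∈ affineCone Aᶜ) (hx : x ∈ affineCone A) (hp0 : p ≠ 0) (hx0 : x ≠ 0) :
    residual F p x ≠ 0 := by
  intro h0
  obtain ⟨hpxx, hppx⟩ := LinearIndependent.pair_iff.mp
    (linearIndependent_of_mem_affineCone hp hx hp0 hx0) _ _ h0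
  obtain ⟨y, hy, hFy⟩ := exists_mem_eval_ne_zero hF three_ne_zero hA hp hx hp0 hx0
    (Submodule.mem_span_of_mem (Set.mem_insert p {x}))
    (Submodule.mem_span_of_mem (Set.mem_insert_of_mem p rfl))
  obtain ⟨a, b, rfl⟩ := Submodule.mem_span_pair.mp hy
  refine hFy ?_
  rw [eval_smul_add_smul hF, eval_eq_zero_of_mem_affineCone hF three_ne_zero hp,
    eval_eq_zero_of_mem_affineCone hF three_ne_zero hx, hpxx, neg_eq_zero.mp hppx]
  simp

lemma isClosed_setOf_residual_mem (hF : F.IsHomogeneous 3) (hA : IsClosed A) (p : Fin n → ℝ) :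
    IsClosed {P : zeroSet F | residual F p P.1.rep ∈ affineCone A} := by
  have hcont : Continuous (residual F p) := by
    have hpxx : Continuous fun x => polarForm F p x x :=
      continuous_polarForm continuous_const continuous_id continuous_id
    have hppx : Continuous fun x => polarForm F p p x :=
      continuous_polarForm continuous_const continuous_const continuous_id
    unfold residual
    fun_prop
  refine isClosed_setOf_rep_mem ((isClosed_affineCone hF three_ne_zero hA).preimage hcont) ?_
  intro a v hv
  have hsmul := residual_smul_smul F 1 a p v
  rw [one_smul] at hsmul
  rw [Set.mem_preimage, Units.smul_def, hsmul]
  exact smul_mem_affineCone _ hv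

lemma isClosed_setOf_exists_add_smul_mem (hF : F.IsHomogeneous 3) (hA : IsClosed A)
    (hp : p ∈ affineCone Aᶜ) (hp0 : p ≠ 0) :
    IsClosed {y | ∃ t : ℝ, y + t • p ∈ affineCone A} := by
  obtain ⟨ψ, hψ⟩ := SeparatingDual.exists_eq_one (R := ℝ) hp0
  let L : (Fin n → ℝ) →L[ℝ] Fin n → ℝ := .id ℝ _ - ψ.smulRight p
  have himage : {y | ∃ t : ℝ, y + t • p ∈ affineCone A} = L ⁻¹' (L '' affineCone A) := by
    ext y
    constructor
    · rintro ⟨t, ht⟩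
      refine ⟨_, ht, ?_⟩
      simp only [L, sub_apply, ContinuousLinearMap.id_apply,
        ContinuousLinearMap.smulRight_apply, map_add, map_smul, hψ]
      module
    · rintro ⟨v, hv, hvy : v - ψ v • p = y - ψ y • p⟩
      refine ⟨ψ v - ψ y, ?_⟩
      have : y + (ψ v - ψ y) • p = v := by
        linear_combination (norm := module) -hvy
      rwa [this]
  rw [himage]
  refine (isClosed_image_of_isClosed_cone (isClosed_affineCone hF three_ne_zero hA)
    (fun a v hv => smul_mem_affineCone a hv) L fun v hv hLv => ?_).preimage L.continuous
  have hvp : v = ψ v • p := sub_eq_zero.mp hLv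
  exact eq_zero_of_mem_affineCone_of_mem_compl hv (hvp ▸ smul_mem_affineCone _ hp)

/-- `A` is a *pseudoplane* in the hypersurface `F = 0`: a connected union of connected components
such that the rest of the hypersurface misses a hyperplane. It models the non-convex component of a
real cubic surface with two components; of the convex component only its position in an affine chart
is recorded. -/
structure IsPseudoplane (A : Set (zeroSet F)) : Prop where
  isClopen : IsClopen A
  isPreconnected : IsPreconnected A
  exists_linear : ∃ φ : (Fin n → ℝ) →ₗ[ℝ] ℝ, ∀ P ∉ A, φ P.1.rep ≠ 0

namespace IsPseudoplane

lemma exists_mem_apply_eq_zero (h : IsPseudoplane A) (hn : 4 ≤ n) (hF : F.IsHomogeneous 3)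
    (g : (Fin n → ℝ) →ₗ[ℝ] ℝ) : ∃ x ∈ affineCone A, x ≠ 0 ∧ g x = 0 := by
  obtain ⟨φ, hφ⟩ := h.exists_linear
  obtain ⟨x, ⟨hgx, hφx⟩, hx0, hFx⟩ := exists_mem_eval_eq_zero hF (by decide)
    (two_le_finrank_ker_inf_ker (by simpa using hn) g φ)
  refine ⟨x, (mem_affineCone_or_compl hF A hFx).resolve_right fun hx => ?_, hx0, hgx⟩
  obtain ⟨P, hP, a, ha, rfl⟩ := exists_smul_rep_eq hx hx0
  exact mul_ne_zero ha (hφ P hP) (by simpa using hφx)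

lemma exists_residual_mem (h : IsPseudoplane A) (hn : 4 ≤ n) (hF : F.IsHomogeneous 3)
    (hp : p ∈ affineCone Aᶜ) : ∃ P ∈ A, residual F p P.1.rep ∈ affineCone Aᶜ := by
  obtain ⟨x, hx, hx0, htan⟩ := h.exists_mem_apply_eq_zero hn hF (polarForm F p p)
  obtain ⟨P, hP, a, ha, rfl⟩ := exists_smul_rep_eq hx hx0
  refine ⟨P, hP, ?_⟩
  rw [map_smul, smul_eq_zero_iff_right ha] at htan
  rw [residual, htan, neg_zero, zero_smul, add_zero]
  exact smul_mem_affineCone _ hp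

lemma residual_mem (h : IsPseudoplane A) (hn : 4 ≤ n) (hF : F.IsHomogeneous 3)
    (hp : p ∈ affineCone Aᶜ) (hx : x ∈ affineCone A) : residual F p x ∈ affineCone Aᶜ := by
  have hres {x} (hx : x ∈ affineCone A) :
      residual F p x ∈ affineCone A ∨ residual F p x ∈ affineCone Aᶜ :=
    mem_affineCone_or_compl hF A (eval_residual hF
      (eval_eq_zero_of_mem_affineCone hF three_ne_zero hp)
      (eval_eq_zero_of_mem_affineCone hF three_ne_zero hx))
  rcases eq_or_ne p 0 with rfl | hp0
  · simpa [residual] using smul_mem_affineCone 0 hp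
  rcases eq_or_ne x 0 with rfl | hx0
  · simpa [residual] using smul_mem_affineCone 0 hp
  refine (hres hx).resolve_left fun hA => ?_
  obtain ⟨X, hX, a, ha, rfl⟩ := exists_smul_rep_eq hx hx0
  have hsmul := residual_smul_smul F 1 a p X.1.rep
  rw [one_smul] at hsmul
  rw [hsmul, smul_mem_affineCone_iff (by positivity)] at hA
  obtain ⟨Z, hZ, hZA⟩ := h.exists_residual_mem hn hF hp
  obtain ⟨Y, hY, hYA, hYA'⟩ := isPreconnected_closed_iff.mp h.isPreconnected _ _
    (isClosed_setOf_residual_mem hF h.isClopen.isClosed p)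
    (isClosed_setOf_residual_mem hF h.isClopen.compl.isClosed p)
    (fun Y hY => hres (rep_mem_affineCone.mpr hY)) ⟨X, hX, hA⟩ ⟨Z, hZ, hZA⟩
  exact residual_ne_zero hF h.isClopen hp (rep_mem_affineCone.mpr hY) hp0 Y.1.rep_nonzero
    (eq_zero_of_mem_affineCone_of_mem_compl hYA hYA')

lemma polarForm_ne_zero (h : IsPseudoplane A) (hn : 4 ≤ n) (hF : F.IsHomogeneous 3)
    (hp : p ∈ affineCone Aᶜ) (hx : x ∈ affineCone A) (hp0 : p ≠ 0) (hx0 : x ≠ 0) :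
    polarForm F p x x ≠ 0 := by
  intro h0
  have hres : residual F p x = -polarForm F p p x • x := by rw [residual, h0, zero_smul, zero_add]
  refine residual_ne_zero hF h.isClopen hp hx hp0 hx0
    (eq_zero_of_mem_affineCone_of_mem_compl ?_ (h.residual_mem hn hF hp hx))
  exact hres ▸ smul_mem_affineCone _ hx

lemma eventually_exists_add_smul_mem (h : IsPseudoplane A) (hn : 4 ≤ n) (hF : F.IsHomogeneous 3)
    (hp : p ∈ affineCone Aᶜ) (hx : x ∈ affineCone A) (hp0 : p ≠ 0) (hx0 : x ≠ 0) :
    ∀ᶠ z in 𝓝 x, ∃ t : ℝ, z + t • p ∈ affineCone A := by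
  have hFx : eval x F = 0 := eval_eq_zero_of_mem_affineCone hF three_ne_zero hx
  have hexpand (t : ℝ) : eval (x + t • p) F = 3 * polarForm F p x x * t +
      3 * polarForm F x p p * t ^ 2 := by
    have := eval_smul_add_smul hF 1 t x p
    rw [one_smul, eval_eq_zero_of_mem_affineCone hF three_ne_zero hp, hFx,
      polarForm_swap₂₃ F x x p, polarForm_swap₁₂ F x p x] at this
    linear_combination this
  have hderiv : HasDerivAt (fun t : ℝ => eval (x + t • p) F) (3 * polarForm F p x x) 0 := by
    have := ((hasDerivAt_id (0 : ℝ)).const_mul (3 * polarForm F p x x)).fun_add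
      ((hasDerivAt_pow 2 (0 : ℝ)).const_mul (3 * polarForm F x p p))
    simpa [hexpand] using this
  have hcont : Continuous fun q : (Fin n → ℝ) × ℝ => q.1 + q.2 • p := by fun_prop
  have hxA : x + (0 : ℝ) • p ∉ affineCone Aᶜ := by
    rw [zero_smul, add_zero]
    exact fun hx' => hx0 (eq_zero_of_mem_affineCone_of_mem_compl hx hx')
  have hopen := (isClosed_affineCone hF three_ne_zero h.isClopen.compl.isClosed).isOpen_compl
  have hzero := eventually_exists_eq_zero_of_deriv_ne_zero
    ((MvPolynomial.continuous_eval F).comp hcont) ((hopen.preimage hcont).mem_nhds hxA)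
    (by simpa using hFx) (by simpa [hderiv.deriv] using h.polarForm_ne_zero hn hF hp hx hp0 hx0)
  refine hzero.mono fun z ⟨t, hz, hFz⟩ => ⟨t, ?_⟩
  exact (mem_affineCone_or_compl hF A hFz).resolve_right hz

lemma exists_add_smul_mem (h : IsPseudoplane A) (hn : 4 ≤ n) (hF : F.IsHomogeneous 3)
    (hp : p ∈ affineCone Aᶜ) (hp0 : p ≠ 0) {y : Fin n → ℝ} (hy : y ∉ Submodule.span ℝ {p}) :
    ∃ t : ℝ, y + t • p ∈ affineCone A := by
  let s : Set (Fin n → ℝ) := (Submodule.span ℝ {p} : Set (Fin n → ℝ))ᶜ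
  let Y := {y | ∃ t : ℝ, y + t • p ∈ affineCone A}
  have hs : IsPreconnected s := by
    refine (isConnected_compl_of_one_lt_codim ?_).isPreconnected
    have hadd := Submodule.finrank_quotient_add_finrank (Submodule.span ℝ {p})
    rw [finrank_span_singleton hp0, Module.finrank_fin_fun] at hadd
    rw [← Module.finrank_eq_rank]
    exact_mod_cast show 1 < Module.finrank ℝ _ by lia
  have hsopen : IsOpen s := (Submodule.closed_of_finiteDimensional _).isOpen_compl
  have hYopen : IsOpen (s ∩ Y) := by
    refine isOpen_iff_mem_nhds.mpr fun z ⟨hz, t, ht⟩ => ?_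
    have ht0 : z + t • p ≠ 0 := fun h0 => hz (Submodule.mem_span_singleton.mpr
      ⟨-t, by rw [neg_smul, eq_neg_of_add_eq_zero_left h0]⟩)
    have hcont : ContinuousAt (fun z => z + t • p) z := by fun_prop
    filter_upwards [hsopen.mem_nhds hz,
      hcont.eventually (h.eventually_exists_add_smul_mem hn hF hp ht hp0 ht0)] with z' hz' ⟨r, hr⟩
    exact ⟨hz', t + r, by rwa [add_smul, ← add_assoc]⟩
  obtain ⟨x, hx, hx0, -⟩ := h.exists_mem_apply_eq_zero hn hF 0
  have hxs : x ∉ Submodule.span ℝ {p} := fun hspan => by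
    obtain ⟨a, rfl⟩ := Submodule.mem_span_singleton.mp hspan
    exact hx0 (eq_zero_of_mem_affineCone_of_mem_compl hx (smul_mem_affineCone a hp))
  refine (hs.subset_of_closure_inter_subset hYopen
    ⟨x, hxs, hxs, 0, by rwa [zero_smul, add_zero]⟩ fun z ⟨hz, hzs⟩ => ⟨hzs, ?_⟩) hy |>.2
  exact closure_minimal Set.inter_subset_right
    (isClosed_setOf_exists_add_smul_mem hF h.isClopen.isClosed hp hp0) hz

end IsPseudoplane

end Pseudoplane

section RealClasses

variable {n : ℕ} {F : MvPolynomial (Fin n) ℝ} {A : Set (zeroSet F)} {P Q R : zeroSet F}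

namespace IsPseudoplane

lemma notMem_of_tripleRel (h : IsPseudoplane A) (hn : 4 ≤ n) (hF : F.IsHomogeneous 3)
    (hPQR : TripleRel F P Q R) (hP : P ∉ A) (hQ : Q ∈ A) : R ∉ A := by
  intro hR
  have hp : P.1.rep ∈ affineCone Aᶜ := rep_mem_affineCone.mpr hP
  have hx : Q.1.rep ∈ affineCone A := rep_mem_affineCone.mpr hQ
  obtain ⟨a, ha⟩ := Submodule.mem_span_singleton.mp (hPQR.residual_mem_span hF)
  refine residual_ne_zero hF h.isClopen hp hx P.1.rep_nonzero Q.1.rep_nonzero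
    (eq_zero_of_mem_affineCone_of_mem_compl ?_ (h.residual_mem hn hF hp hx))
  exact ha ▸ smul_mem_affineCone a (rep_mem_affineCone.mpr hR)

lemma mem_of_tripleRel (h : IsPseudoplane A) (hn : 4 ≤ n) (hF : F.IsHomogeneous 3)
    (hPQR : TripleRel F P Q R) (hP : P ∉ A) (hQ : Q ∉ A) : R ∈ A := by
  obtain ⟨W, hW, hmeet⟩ := hPQR
  have hp : P.1.rep ∈ affineCone Aᶜ := rep_mem_affineCone.mpr hP
  have hPW : P.1.rep ∈ W := by
    rcases hmeet with ⟨-, hmeet⟩ | ⟨-, hPW, -⟩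
    exacts [hmeet.onLine, hPW]
  obtain ⟨y, hyW, hy⟩ := exists_mem_notMem_span_singleton hW.ge P.1.rep
  obtain ⟨t, hx⟩ := h.exists_add_smul_mem hn hF hp P.1.rep_nonzero hy
  have hxW : y + t • P.1.rep ∈ W := W.add_mem hyW (W.smul_mem t hPW)
  have hx0 : y + t • P.1.rep ≠ 0 := fun h0 => hy (Submodule.mem_span_singleton.mpr
    ⟨-t, by rw [neg_smul, eq_neg_of_add_eq_zero_left h0]⟩)
  rcases hmeet with ⟨-, hmeet⟩ | ⟨hS, -⟩
  · obtain ⟨X, hX, hXx⟩ := hx hx0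
    rcases hmeet.eq_of_eval_eq_zero hW hxW hx0
      (eval_eq_zero_of_mem_affineCone hF three_ne_zero hx) with hXP | hXQ | hXR
    · exact absurd (Subtype.ext (hXx.trans hXP) ▸ hX) hP
    · exact absurd (Subtype.ext (hXx.trans hXQ) ▸ hX) hQ
    · exact Subtype.ext (hXx.trans hXR) ▸ hX
  · obtain ⟨v, hvW, hv⟩ := exists_mem_eval_ne_zero hF three_ne_zero h.isClopen hp hx
      P.1.rep_nonzero hx0 hPW hxW
    exact absurd (lineOnSurf_iff.mp hS v hvW) hv

lemma mem_iff_of_tripleRel (h : IsPseudoplane A) (hn : 4 ≤ n) (hF : F.IsHomogeneous 3)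
    (hPQR : TripleRel F P Q R) : R ∈ A ↔ (P ∈ A ↔ Q ∈ A) := by
  by_cases hP : P ∈ A <;> by_cases hQ : Q ∈ A
  · have hR : R ∈ A := by_contra fun hR =>
      h.notMem_of_tripleRel hn hF hPQR.rotate.rotate hR hP hQ
    simpa [hP, hQ] using hR
  · simpa [hP, hQ] using h.notMem_of_tripleRel hn hF hPQR.swap hQ hP
  · simpa [hP, hQ] using h.notMem_of_tripleRel hn hF hPQR hP hQ
  · simpa [hP, hQ] using h.mem_of_tripleRel hn hF hPQR hP hQ

lemma HClass_eq_of_mem (h : IsPseudoplane A) (hn : 4 ≤ n) (hF : F.IsHomogeneous 3) (hP : P ∈ A)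
    (hQ : Q ∈ A) : HClass F P = HClass F Q := by
  have htangent {P} (hP : P ∈ A) : ∃ R, TripleRel F R R P :=
    exists_tripleRel_self_right hn hF h.isPreconnected hP fun R hR =>
      (h.mem_iff_of_tripleRel hn hF hR).mpr Iff.rfl
  obtain ⟨R, hR⟩ := htangent hP
  obtain ⟨R', hR'⟩ := htangent hQ
  exact hR.HClass_eq_of_self hn hF hR'

lemma HClass_eq_of_notMem (h : IsPseudoplane A) (hn : 4 ≤ n) (hF : F.IsHomogeneous 3) (hP : P ∉ A)
    (hQ : Q ∉ A) : HClass F P = HClass F Q := by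
  rcases eq_or_ne P Q with rfl | hPQ
  · rfl
  obtain ⟨R, hR⟩ := exists_tripleRel hF hPQ
  obtain ⟨S, hS⟩ := exists_tripleRel_self hn hF P
  have hRS : HClass F R = HClass F S := h.HClass_eq_of_mem hn hF
    (h.mem_of_tripleRel hn hF hR hP hQ) (h.mem_of_tripleRel hn hF hS hP hP)
  have hadd := hR.HClass_add_eq hS
  rw [hRS] at hadd
  exact (add_left_cancel (add_right_cancel hadd)).symm

lemma exists_H0_addEquiv (h : IsPseudoplane A) (hn : 4 ≤ n) (hF : F.IsHomogeneous 3)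
    {P₀ P₁ : zeroSet F} (hP₀ : P₀ ∈ A) (hP₁ : P₁ ∉ A) :
    ∃ e : H0 F ≃+ ZMod 2, ∀ P, (P ∈ A → e (H0diff F P P₀) = 0) ∧
      (P ∉ A → e (H0diff F P P₀) = 1) := by
  classical
  let χ (P : zeroSet F) : ZMod 2 := if P ∈ A then 0 else 1
  have hχ (P Q R : zeroSet F) (hPQR : TripleRel F P Q R) : χ P + χ Q + χ R = 0 := by
    have hR := h.mem_iff_of_tripleRel hn hF hPQR
    by_cases hP : P ∈ A <;> by_cases hQ : Q ∈ A <;>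
      simp [χ, hP, hQ, hR, CharTwo.add_self_eq_zero]
  have hclass (P Q : zeroSet F) (hPQ : χ P = χ Q) : HClass F P = HClass F Q := by
    by_cases hP : P ∈ A <;> by_cases hQ : Q ∈ A
    · exact h.HClass_eq_of_mem hn hF hP hQ
    · simp [χ, hP, hQ] at hPQ
    · simp [χ, hP, hQ] at hPQ
    · exact h.HClass_eq_of_notMem hn hF hP hQ
  obtain ⟨e, he⟩ := exists_H0_addEquiv_zmod_two hχ hclass (HClass_add_self_eq hn hF)
    (if_pos hP₀ : χ P₀ = 0) (if_neg hP₁ : χ P₁ = 1)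
  exact ⟨e, fun P => ⟨fun hP => (he P).trans (if_pos hP), fun hP => (he P).trans (if_neg hP)⟩⟩

end IsPseudoplane

lemma H0_eq_bot_of_preconnectedSpace (hn : 4 ≤ n) (hF : F.IsHomogeneous 3)
    [PreconnectedSpace (zeroSet F)] : H0 F = ⊥ := by
  refine H0_eq_bot fun P Q => ?_
  have htangent (P : zeroSet F) : ∃ R, TripleRel F R R P :=
    exists_tripleRel_self_right hn hF isPreconnected_univ (Set.mem_univ P) fun _ _ => trivial
  obtain ⟨R, hR⟩ := htangent P
  obtain ⟨R', hR'⟩ := htangent Q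
  exact hR.HClass_eq_of_self hn hF hR'

end RealClasses

end CubicSurf

open CubicSurf MvPolynomial in
theorem H0_of_real_cubic_surface_general {n : ℕ} (hn : 4 ≤ n) {F : MvPolynomial (Fin n) ℝ}
    (hF : F.IsHomogeneous 3) :
    (@PreconnectedSpace (zeroSet F) (surfTop F) → H0 F = ⊥) ∧
    ∀ A B : Set (Projectivization ℝ (Fin n → ℝ)), A ∪ B = zeroSet F → Disjoint A B →
      @IsPreconnected (zeroSet F) (surfTop F) (Subtype.val ⁻¹' A) →
      @IsClopen (zeroSet F) (surfTop F) (Subtype.val ⁻¹' A) →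
      B.Nonempty → (∃ φ : (Fin n → ℝ) →ₗ[ℝ] ℝ, ∀ P ∈ B, φ P.rep ≠ 0) →
      ∀ P₀ : zeroSet F, P₀.1 ∈ A → ∃ e : H0 F ≃+ ZMod 2, ∀ P : zeroSet F,
        (P.1 ∈ A → e (H0diff F P P₀) = 0) ∧ (P.1 ∈ B → e (H0diff F P P₀) = 1) := by
  refine ⟨fun h => @H0_eq_bot_of_preconnectedSpace n F hn hF h, ?_⟩
  rintro A B hAB hdisj hconn hclopen ⟨P₁, hP₁⟩ ⟨φ, hφ⟩ P₀ hP₀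
  have hA : IsPseudoplane (Subtype.val ⁻¹' A : Set (zeroSet F)) :=
    ⟨hclopen, hconn, φ, fun P hP => hφ P.1 ((hAB.ge P.2).resolve_left hP)⟩
  have hP₁F : P₁ ∈ zeroSet F := hAB.le (.inr hP₁)
  obtain ⟨e, he⟩ := hA.exists_H0_addEquiv hn hF (P₁ := ⟨P₁, hP₁F⟩) hP₀
    (hdisj.notMem_of_mem_right hP₁)
  exact ⟨e, fun P => ⟨(he P).1, fun hP => (he P).2 (hdisj.notMem_of_mem_right hP)⟩⟩

open CubicSurf MvPolynomial in
/-- Let `S` be a smooth cubic surface over `ℝ` with `S(ℝ) ≠ ∅`.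
If `S(ℝ)` is connected then `H⁰_S(ℝ) = 0`.  If `S(ℝ)` has two connected components
`A` (non-convex) and `B` (convex), then for any base point `P₀ ∈ A` there is an
isomorphism `H⁰_S(ℝ) ≃ ℤ/2ℤ` sending `[P] - [P₀]` to `0` for `P ∈ A` and to `1` for
`P ∈ B`. -/
theorem H0_of_real_cubic_surface
    (F : MvPolynomial (Fin 4) ℝ) (hF : SmoothCubic F)
    (hne : (zeroSet F).Nonempty) :
    (@ConnectedSpace (zeroSet F) (surfTop F) → H0 F = ⊥) ∧
    (∀ A B : Set (Projectivization ℝ (Fin 4 → ℝ)),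
      A ⊆ zeroSet F → B ⊆ zeroSet F → A ∪ B = zeroSet F → Disjoint A B →
      @IsConnected (zeroSet F) (surfTop F) (Subtype.val ⁻¹' A) →
      @IsConnected (zeroSet F) (surfTop F) (Subtype.val ⁻¹' B) →
      @IsClopen (zeroSet F) (surfTop F) (Subtype.val ⁻¹' A) →
      ¬ ProjConvex A → ProjConvex B →
      ∀ P₀ : zeroSet F, P₀.1 ∈ A →
        ∃ e : H0 F ≃+ ZMod 2,
          ∀ P : zeroSet F,
            (P.1 ∈ A → e (H0diff F P P₀) = 0) ∧
            (P.1 ∈ B → e (H0diff F P P₀) = 1)) := by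
  obtain ⟨hconn, hsplit⟩ := H0_of_real_cubic_surface_general le_rfl hF.1
  refine ⟨fun h => hconn h.1, ?_⟩
  rintro A B - - hAB hdisj hA ⟨⟨P₁, hP₁⟩, -⟩ hclopen - ⟨φ, hφ, -⟩
  exact hsplit A B hAB hdisj hA.2 hclopen ⟨P₁, hP₁⟩ ⟨φ, hφ⟩
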